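/- arXiv:1610.03301 — 3 statements merged into one kernel-verified Lean document; each statement's English description precedes it below -/
import Mathlib

section
/- The sequence k ↦ (Nat.card {p : Equiv.Perm (Fin k) × Equiv.Perm (Fin k) // G_c(p.1, p.2) = the equal-sign subgroup of Equiv.Perm (Fin k) × Equiv.Perm (Fin k)} : ℝ) / (k !)^2 tends to 1/4 as k → ∞; that is, the group circularly generated by a pair of uniformly random permutations of k points equals (A_k × A_k) ⋊ ⟨(π, π)⟩ (π a transposition), i.e. the subgroup of pairs with equal signatures, with probability tending to 1/4. -/
/-- The group circularly generated by a pair `(σ, τ)` of permutations: the subgroup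
of `Equiv.Perm (Fin k) × Equiv.Perm (Fin k)` generated by `(σ, τ)` and `(τ, σ)`. -/
def circGenPair {k : ℕ} (σ τ : Equiv.Perm (Fin k)) :
    Subgroup (Equiv.Perm (Fin k) × Equiv.Perm (Fin k)) :=
  Subgroup.closure {(σ, τ), (τ, σ)}

/-- The equal-sign subgroup of `S_k × S_k`: the kernel of `(a, b) ↦ sign a * sign b`,
i.e. the pairs of permutations with equal signatures. It is the internal semidirect
product `(A_k × A_k) ⋊ ⟨(π, π)⟩` for any transposition `π`. -/
def equalSignSubgroup (k : ℕ) : Subgroup (Equiv.Perm (Fin k) × Equiv.Perm (Fin k)) :=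
  MonoidHom.ker
    ((Equiv.Perm.sign.comp (MonoidHom.fst (Equiv.Perm (Fin k)) (Equiv.Perm (Fin k)))) *
      (Equiv.Perm.sign.comp (MonoidHom.snd (Equiv.Perm (Fin k)) (Equiv.Perm (Fin k)))))

/-!
If `circGenPair σ τ` is the whole equal-sign subgroup, then `σ` and `τ` are both odd, which happens
with probability `1/4`. Conversely, with probability tending to `1` the following two properties
hold, and together with odd signatures they suffice.

* `⟨σ, τ⟩` is primitive: the expected number of proper nonempty subsets and of nontrivial
  equipartitions preserved by both permutations is at most a sum of inverse binomial coefficients.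
* For some `M`, `σ ^ M` is a cycle of prime length `p ≤ k / 2` while `τ ^ M = 1`. A second moment
  computation shows that `σ` has a cycle whose length is a prime from a range over which `∑ 1 / p`
  is large. If `∑ 1 / p ^ 2` is small over this range, then `p` rarely divides the length of another
  cycle of `σ` or of a cycle of `τ`, and a suitable power kills everything but the `p`-cycle.

By Jordan's theorem `⟨σ, τ⟩` is then the symmetric group. Moreover `(c, 1)` and `(1, c)` lie in
`circGenPair σ τ` for the nontrivial `c = σ ^ M`, so its Goursat kernels are nontrivial normal
subgroups of the symmetric group, and hence contain the alternating group.
-/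

open Finset Filter
open scoped BigOperators

section Proportion

variable {Ω Ω' ι : Type*}

/-- The proportion of the elements of a finite type `Ω` that lie in `s`: the probability of the
event `s` under the uniform distribution on `Ω`. It is `0` when `Ω` is empty or infinite. -/
noncomputable def proportion (s : Set Ω) : ℝ := s.ncard / Nat.card Ω

theorem proportion_nonneg (s : Set Ω) : 0 ≤ proportion s := by
  unfold proportion
  positivity

theorem proportion_univ [Finite Ω] [Nonempty Ω] : proportion (Set.univ : Set Ω) = 1 := by
  rw [proportion, Set.ncard_univ, div_self (by exact_mod_cast Nat.card_pos.ne')]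

theorem proportion_prod (s : Set Ω) (t : Set Ω') :
    proportion (s ×ˢ t) = proportion s * proportion t := by
  simp only [proportion, Set.ncard_prod, Nat.card_prod, Nat.cast_mul, mul_div_mul_comm]

theorem proportion_mono [Finite Ω] {s t : Set Ω} (h : s ⊆ t) : proportion s ≤ proportion t := by
  unfold proportion
  gcongr
  exact t.toFinite

theorem proportion_union_le (s t : Set Ω) :
    proportion (s ∪ t) ≤ proportion s + proportion t := by
  unfold proportion
  rw [← add_div]
  gcongr
  exact_mod_cast Set.ncard_union_le s t

theorem proportion_biUnion_le (I : Finset ι) (s : ι → Set Ω) :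
    proportion (⋃ i ∈ I, s i) ≤ ∑ i ∈ I, proportion (s i) := by
  classical
  induction I using Finset.induction with
  | empty => simp [proportion]
  | insert i I hi ih =>
    rw [Finset.set_biUnion_insert, Finset.sum_insert hi]
    exact (proportion_union_le _ _).trans (by gcongr)

variable [Fintype Ω]

theorem proportion_eq_expect_indicator (s : Set Ω) :
    proportion s = 𝔼 x, s.indicator (1 : Ω → ℝ) x := by
  classical
  rw [Fintype.expect_eq_sum_div_card, Finset.sum_indicator_eq_sum_filter]
  simp [proportion, Set.ncard_eq_toFinset_card _ s.toFinite]

theorem expect_ncard_eq_sum_proportion [Fintype ι] (R : Ω → ι → Prop) :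
    𝔼 x, ({i | R x i}.ncard : ℝ) = ∑ i, proportion {x | R x i} := by
  classical
  have ncard_eq (x : Ω) : ({i | R x i}.ncard : ℝ) = ∑ i, {x | R x i}.indicator (1 : Ω → ℝ) x := by
    simp [Set.indicator_apply, Set.ncard_eq_toFinset_card _ (Set.toFinite _)]
  simp only [ncard_eq, proportion_eq_expect_indicator, Finset.expect_sum_comm]

theorem proportion_mul_le_expect {f : Ω → ℝ} (hf : 0 ≤ f) {c : ℝ} {s : Set Ω}
    (hs : ∀ x ∈ s, c ≤ f x) : proportion s * c ≤ 𝔼 x, f x := by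
  rw [proportion_eq_expect_indicator, Finset.expect_mul]
  refine Finset.expect_le_expect fun x _ => ?_
  by_cases hx : x ∈ s
  · simpa [hx] using hs x hx
  · simpa [hx] using hf x

theorem proportion_mul_sq_expect_le {f : Ω → ℝ} {s : Set Ω} (hs : ∀ x ∈ s, f x = 0) :
    proportion s * (𝔼 x, f x) ^ 2 ≤ 𝔼 x, f x ^ 2 - (𝔼 x, f x) ^ 2 := by
  cases isEmpty_or_nonempty Ω
  · simp
  set m := 𝔼 x, f x with hm
  calc proportion s * m ^ 2 ≤ 𝔼 x, (f x - m) ^ 2 :=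
        proportion_mul_le_expect (fun x => sq_nonneg _) fun x hx => by simp [hs x hx]
    _ = 𝔼 x, f x ^ 2 - m ^ 2 := by
        simp only [sub_sq, Finset.expect_add_distrib, Finset.expect_sub_distrib,
          ← Finset.expect_mul, ← Finset.mul_expect, ← hm, Fintype.expect_const]
        ring

end Proportion

section TransitiveAction

open MulAction Pointwise

variable {G Ω : Type*} [Group G] [MulAction G Ω] [IsPretransitive G Ω]

theorem proportion_setOf_smul_eq [Finite G] (w w' : Ω) :
    proportion {g : G | g • w = w'} = 1 / Nat.card Ω := by
  obtain ⟨h, rfl⟩ := exists_smul_eq G w w'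
  have coset : {g : G | g • w = h • w} = h • (stabilizer G w : Set G) := by
    ext g
    simp [Set.mem_smul_set_iff_inv_smul_mem, mul_smul, inv_smul_eq_iff]
  have index_mul : Nat.card Ω * Nat.card (stabilizer G w) = Nat.card G := by
    rw [← index_stabilizer_of_transitive G w, Subgroup.index_mul_card]
  have card_pos : (0 : ℝ) < Nat.card (stabilizer G w) := by exact_mod_cast Nat.card_pos
  rw [proportion, coset, Set.ncard_smul_set, ← Nat.card_coe_set_eq, SetLike.coe_sort_coe,
    ← index_mul]
  push_cast
  field_simp

theorem expect_ncard_setOf_smul_eq [Fintype G] [Finite Ω] [Nonempty Ω] (φ : Ω → Ω) :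
    𝔼 g : G, ({w | g • w = φ w}.ncard : ℝ) = 1 := by
  have := Fintype.ofFinite Ω
  rw [expect_ncard_eq_sum_proportion]
  simp [proportion_setOf_smul_eq]

theorem proportion_exists_common_fixedPoint_le [Finite G] [Finite Ω] :
    proportion {q : G × G | ∃ w : Ω, q.1 • w = w ∧ q.2 • w = w} ≤ 1 / Nat.card Ω := by
  have := Fintype.ofFinite Ω
  calc proportion {q : G × G | ∃ w : Ω, q.1 • w = w ∧ q.2 • w = w}
      ≤ proportion (⋃ w ∈ (univ : Finset Ω), {g : G | g • w = w} ×ˢ {g : G | g • w = w}) :=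
        proportion_mono fun q ⟨w, hw⟩ => by
          simp only [mem_univ, Set.iUnion_true, Set.mem_iUnion]
          exact ⟨w, hw⟩
    _ ≤ ∑ w : Ω, proportion ({g : G | g • w = w} ×ˢ {g : G | g • w = w}) :=
        proportion_biUnion_le _ _
    _ = 1 / Nat.card Ω := by
        simp only [proportion_prod, proportion_setOf_smul_eq, sum_const, card_univ, nsmul_eq_mul,
          Nat.card_eq_fintype_card]
        rw [← mul_assoc, mul_one_div]
        obtain h | h := eq_or_ne (Fintype.card Ω : ℝ) 0 <;> simp [h]

end TransitiveAction

section Intertwiners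

open Equiv Function

variable {ι α : Type*}

/-- The embeddings of `ι` into `α` that carry the permutation `r` of `ι` to the restriction of `σ`
to their range. When `r` is a rotation of `ZMod a`, these are the `a`-cycles of `σ`, each of them
counted once for every choice of a starting point. -/
def intertwiners (r : Perm ι) (σ : Perm α) : Set (ι ↪ α) := {f | Semiconj f r σ}

variable [Finite ι] [Fintype α] [DecidableEq α]

theorem expect_ncard_intertwiners [Nonempty (ι ↪ α)] (r : Perm ι) :
    𝔼 σ : Perm α, ((intertwiners r σ).ncard : ℝ) = 1 := by
  have : MulAction.IsPretransitive (Perm α) (ι ↪ α) := ⟨Perm.exists_smul_eq_embedding⟩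
  convert expect_ncard_setOf_smul_eq (G := Perm α) (fun f : ι ↪ α => r.toEmbedding.trans f)
    using 5 with σ
  ext f
  simp [intertwiners, Semiconj, DFunLike.ext_iff, eq_comm]

theorem expect_ncard_intertwiners_le_one (r : Perm ι) :
    𝔼 σ : Perm α, ((intertwiners r σ).ncard : ℝ) ≤ 1 := by
  cases isEmpty_or_nonempty (ι ↪ α) with
  | inl _ => simp [Set.eq_empty_of_isEmpty]
  | inr _ => exact (expect_ncard_intertwiners r).le

end Intertwiners

section Cycles

open Equiv Function

variable {α : Type*}

theorem exists_mem_intertwiners_range_eq_sameCycle (σ : Perm α) (x : α) :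
    ∃ f ∈ intertwiners (Equiv.addRight (1 : ZMod (minimalPeriod σ x))) σ,
      f 0 = x ∧ Set.range f = {y | σ.SameCycle x y} := by
  let f : ZMod (minimalPeriod σ x) ↪ α :=
    (MulAction.orbitZPowersEquiv σ x).symm.toEmbedding.trans (Embedding.subtype _)
  have f_intCast (k : ℤ) : f k = (σ ^ k) x :=
    congrArg Subtype.val (MulAction.orbitZPowersEquiv_symm_apply' σ x k)
  refine ⟨f, fun i => ?_, by simpa using f_intCast 0, Set.ext fun y => ?_⟩
  · obtain ⟨k, rfl⟩ := ZMod.intCast_surjective i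
    change f (k + 1) = σ (f k)
    rw [← Int.cast_one, ← Int.cast_add, f_intCast, f_intCast, add_comm, zpow_add, zpow_one,
      Perm.mul_apply]
  · rw [← ZMod.intCast_surjective.range_comp]
    simp [f_intCast, Perm.SameCycle]

theorem minimalPeriod_apply_of_mem_intertwiners {a : ℕ} {σ : Perm α} {f : ZMod a ↪ α}
    (hf : f ∈ intertwiners (Equiv.addRight (1 : ZMod a)) σ) (i : ZMod a) :
    minimalPeriod σ (f i) = a := by
  have isPeriodicPt_iff (n : ℕ) : IsPeriodicPt σ n (f i) ↔ a ∣ n := by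
    rw [IsPeriodicPt, IsFixedPt, ← (hf.iterate_right n) i, f.injective.eq_iff, Equiv.coe_addRight,
      add_right_iterate, add_eq_left, nsmul_one, ZMod.natCast_eq_zero_iff]
  exact Nat.dvd_antisymm (IsPeriodicPt.minimalPeriod_dvd ((isPeriodicPt_iff a).2 dvd_rfl))
    ((isPeriodicPt_iff _).1 (isPeriodicPt_minimalPeriod _ _))

theorem ncard_setOf_minimalPeriod_eq (a : ℕ) [NeZero a] (σ : Perm α) :
    {x | minimalPeriod σ x = a}.ncard =
      (intertwiners (Equiv.addRight (1 : ZMod a)) σ).ncard := by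
  have image_eq : (fun f : ZMod a ↪ α => f 0) '' intertwiners (Equiv.addRight (1 : ZMod a)) σ =
      {x | minimalPeriod σ x = a} := by
    refine Set.Subset.antisymm ?_ ?_
    · rintro _ ⟨f, hf, rfl⟩
      exact minimalPeriod_apply_of_mem_intertwiners hf 0
    · rintro x rfl
      obtain ⟨f, hf, hf0, -⟩ := exists_mem_intertwiners_range_eq_sameCycle σ x
      exact ⟨f, hf, hf0⟩
  rw [← image_eq, Set.InjOn.ncard_image]
  intro f hf g hg hfg
  ext i
  have apply_eq {h : ZMod a ↪ α} (hh : h ∈ intertwiners (Equiv.addRight (1 : ZMod a)) σ) :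
      h i = σ^[i.val] (h 0) := by
    rw [← (hh.iterate_right i.val) 0, Equiv.coe_addRight, add_right_iterate]
    simp
  rw [apply_eq hf, apply_eq hg]
  exact congrArg _ hfg

theorem ncard_sameCycle (σ : Perm α) (x : α) :
    {y | σ.SameCycle x y}.ncard = minimalPeriod σ x := by
  obtain ⟨f, -, -, hf⟩ := exists_mem_intertwiners_range_eq_sameCycle σ x
  rw [← hf, ← Set.image_univ, Set.ncard_image_of_injective _ f.injective, Set.ncard_univ,
    Nat.card_zmod]

theorem minimalPeriod_eq_of_sameCycle {σ : Perm α} {x y : α} (h : σ.SameCycle x y) :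
    minimalPeriod σ x = minimalPeriod σ y := by
  rw [← ncard_sameCycle, ← ncard_sameCycle]
  congr 1
  ext z
  exact ⟨h.symm.trans, h.trans⟩

theorem minimalPeriod_pos_of_finite [Finite α] (σ : Perm α) (x : α) : 0 < minimalPeriod σ x := by
  rw [← ncard_sameCycle, Set.ncard_pos]
  exact ⟨x, Perm.SameCycle.refl σ x⟩

/-- The pairs of points of `σ` that lie on distinct cycles, of lengths `a` and `b`. Their
number governs the correlation between the numbers of points on `a`-cycles and on `b`-cycles. -/
def distinctCyclePairs (a b : ℕ) (σ : Perm α) : Set (α × α) :=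
  {q | ¬ σ.SameCycle q.1 q.2 ∧ minimalPeriod σ q.1 = a ∧ minimalPeriod σ q.2 = b}

section Expect

variable [Fintype α] [DecidableEq α]

theorem expect_ncard_setOf_minimalPeriod_eq {a : ℕ} [NeZero a] (ha : a ≤ Fintype.card α) :
    𝔼 σ : Perm α, ({x | minimalPeriod σ x = a}.ncard : ℝ) = 1 := by
  have : Nonempty (ZMod a ↪ α) := Embedding.nonempty_of_card_le (by rwa [ZMod.card])
  simp only [ncard_setOf_minimalPeriod_eq, expect_ncard_intertwiners]

theorem expect_ncard_setOf_minimalPeriod_eq_le_one (a : ℕ) [NeZero a] :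
    𝔼 σ : Perm α, ({x | minimalPeriod σ x = a}.ncard : ℝ) ≤ 1 := by
  simpa only [ncard_setOf_minimalPeriod_eq] using expect_ncard_intertwiners_le_one _

theorem expect_ncard_distinctCyclePairs_le_one (a b : ℕ) [NeZero a] [NeZero b] :
    𝔼 σ : Perm α, ((distinctCyclePairs a b σ).ncard : ℝ) ≤ 1 := by
  let r : Perm (ZMod a ⊕ ZMod b) := Equiv.sumCongr (Equiv.addRight 1) (Equiv.addRight 1)
  refine le_trans (Finset.expect_le_expect fun σ _ => ?_) (expect_ncard_intertwiners_le_one r)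
  have subset_image : distinctCyclePairs a b σ ⊆
      (fun f => (f (Sum.inl 0), f (Sum.inr 0))) '' intertwiners r σ := by
    rintro ⟨x, y⟩ ⟨hxy, rfl, rfl⟩
    obtain ⟨f, hf, hf0, f_range⟩ := exists_mem_intertwiners_range_eq_sameCycle σ x
    obtain ⟨g, hg, hg0, g_range⟩ := exists_mem_intertwiners_range_eq_sameCycle σ y
    have ne (i j) : f i ≠ g j := fun h => by
      have hi : f i ∈ {z | σ.SameCycle x z} := f_range ▸ Set.mem_range_self i
      have hj : g j ∈ {z | σ.SameCycle y z} := g_range ▸ Set.mem_range_self j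
      exact hxy (hi.trans (h ▸ hj.symm))
    exact ⟨⟨Sum.elim f g, f.injective.sumElim g.injective ne⟩,
      Sum.rec hf hg, Prod.ext hf0 hg0⟩
  exact_mod_cast (Set.ncard_le_ncard subset_image).trans (Set.ncard_image_le (Set.toFinite _))

end Expect

theorem proportion_exists_minimalPeriod_eq_le [Finite α] (a : ℕ) [NeZero a] :
    proportion {σ : Perm α | ∃ x, minimalPeriod σ x = a} ≤ 1 / a := by
  classical
  have := Fintype.ofFinite α
  have a_pos : (0 : ℝ) < a := by exact_mod_cast NeZero.pos a
  rw [le_div_iff₀ a_pos]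
  refine le_trans (proportion_mul_le_expect (fun σ => Nat.cast_nonneg _) ?_)
    (expect_ncard_setOf_minimalPeriod_eq_le_one a)
  rintro σ ⟨x, rfl⟩
  rw [Nat.cast_le]
  conv_lhs => rw [← ncard_sameCycle]
  exact Set.ncard_le_ncard fun y hy => (minimalPeriod_eq_of_sameCycle hy).symm

theorem proportion_distinctCyclePairs_nonempty_le [Finite α] (a b : ℕ) [NeZero a] [NeZero b] :
    proportion {σ : Perm α | (distinctCyclePairs a b σ).Nonempty} ≤ 1 / (a * b) := by
  classical
  have := Fintype.ofFinite α
  have a_pos : (0 : ℝ) < a := by exact_mod_cast NeZero.pos a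
  have b_pos : (0 : ℝ) < b := by exact_mod_cast NeZero.pos b
  rw [le_div_iff₀ (mul_pos a_pos b_pos)]
  refine le_trans (proportion_mul_le_expect (fun σ => Nat.cast_nonneg _) ?_)
    (expect_ncard_distinctCyclePairs_le_one a b)
  rintro σ ⟨⟨x, y⟩, hxy, rfl, rfl⟩
  rw [← Nat.cast_mul, Nat.cast_le]
  conv_lhs => rw [← ncard_sameCycle, ← ncard_sameCycle, ← Set.ncard_prod]
  refine Set.ncard_le_ncard ?_
  rintro ⟨z, w⟩ ⟨hz, hw⟩
  exact ⟨fun h => hxy (hz.trans (h.trans hw.symm)), (minimalPeriod_eq_of_sameCycle hz).symm,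
    (minimalPeriod_eq_of_sameCycle hw).symm⟩

end Cycles

section SecondMoment

open Equiv Function

variable {α : Type*}

theorem ncard_setOf_sameCycle_le [Finite α] (a : ℕ) [NeZero a] (σ : Perm α) :
    {q : α × α | σ.SameCycle q.1 q.2 ∧ minimalPeriod σ q.1 = a}.ncard ≤
      a * {x | minimalPeriod σ x = a}.ncard := by
  have subset_image : {q : α × α | σ.SameCycle q.1 q.2 ∧ minimalPeriod σ q.1 = a} ⊆
      (fun r : ℕ × α => (r.2, σ^[r.1] r.2)) '' (Set.Iio a ×ˢ {x | minimalPeriod σ x = a}) := by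
    rintro ⟨x, y⟩ ⟨hxy, rfl⟩
    obtain ⟨k, rfl⟩ : ∃ k : ℕ, (σ ^ k) x = y := hxy.exists_nat_pow_eq
    refine ⟨(k % minimalPeriod σ x, x), ⟨Nat.mod_lt _ (NeZero.pos _), rfl⟩, ?_⟩
    simp only [iterate_mod_minimalPeriod_eq, Perm.iterate_eq_pow]
  have finite_prod : (Set.Iio a ×ˢ {x | minimalPeriod σ x = a}).Finite :=
    (Set.finite_Iio a).prod (Set.toFinite _)
  calc _ ≤ _ := Set.ncard_le_ncard subset_image (finite_prod.image _)
    _ ≤ (Set.Iio a ×ˢ {x | minimalPeriod σ x = a}).ncard := Set.ncard_image_le finite_prod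
    _ = a * {x | minimalPeriod σ x = a}.ncard := by rw [Set.ncard_prod, Set.ncard_Iio_nat]

theorem ncard_mul_ncard_setOf_minimalPeriod_le [Finite α] (a b : ℕ) [NeZero a] (σ : Perm α) :
    {x | minimalPeriod σ x = a}.ncard * {x | minimalPeriod σ x = b}.ncard ≤
      (distinctCyclePairs a b σ).ncard +
        if a = b then a * {x | minimalPeriod σ x = a}.ncard else 0 := by
  rw [← Set.ncard_prod]
  split_ifs with hab
  · refine le_trans (Set.ncard_le_ncard ?_) ((Set.ncard_union_le _ _).trans
      (Nat.add_le_add_left (ncard_setOf_sameCycle_le a σ) _))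
    rintro ⟨x, y⟩ ⟨hx, hy⟩
    by_cases h : σ.SameCycle x y
    exacts [Or.inr ⟨h, hx⟩, Or.inl ⟨h, hx, hy⟩]
  · refine Set.ncard_le_ncard ?_
    rintro ⟨x, y⟩ ⟨rfl, rfl⟩
    exact ⟨fun h => hab (minimalPeriod_eq_of_sameCycle h), rfl, rfl⟩

theorem expect_ncard_mul_ncard_setOf_minimalPeriod_le [Fintype α] [DecidableEq α] (a b : ℕ)
    [NeZero a] [NeZero b] :
    𝔼 σ : Perm α, ({x | minimalPeriod σ x = a}.ncard * {x | minimalPeriod σ x = b}.ncard : ℝ) ≤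
      1 + if a = b then (a : ℝ) else 0 := by
  calc _ ≤ 𝔼 σ : Perm α, (((distinctCyclePairs a b σ).ncard : ℝ) +
        (if a = b then (a : ℝ) else 0) * {x | minimalPeriod σ x = a}.ncard) := by
        refine Finset.expect_le_expect fun σ _ => ?_
        rw [ite_mul, zero_mul]
        exact_mod_cast ncard_mul_ncard_setOf_minimalPeriod_le a b σ
    _ = 𝔼 σ : Perm α, ((distinctCyclePairs a b σ).ncard : ℝ) +
        (if a = b then (a : ℝ) else 0) *
          𝔼 σ : Perm α, ({x | minimalPeriod σ x = a}.ncard : ℝ) := by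
        rw [Finset.expect_add_distrib, Finset.mul_expect]
    _ ≤ 1 + (if a = b then (a : ℝ) else 0) * 1 := by
        gcongr
        · exact expect_ncard_distinctCyclePairs_le_one a b
        · exact expect_ncard_setOf_minimalPeriod_eq_le_one a
    _ = _ := by rw [mul_one]

theorem sum_sum_inv_mul_one_add_ite (P : Finset ℕ) (hP : ∀ a ∈ P, 0 < a) :
    ∑ a ∈ P, ∑ b ∈ P, 1 / (a : ℝ) * (1 / b) * (1 + if a = b then (a : ℝ) else 0) =
      (∑ a ∈ P, (1 / a : ℝ)) ^ 2 + ∑ a ∈ P, (1 / a : ℝ) := by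
  simp only [mul_add, mul_one, Finset.sum_add_distrib, mul_ite, mul_zero,
    Finset.sum_ite_eq, ← Finset.sum_mul_sum, ← sq]
  congr 1
  refine Finset.sum_congr rfl fun a ha => ?_
  have : (a : ℝ) ≠ 0 := by exact_mod_cast (hP a ha).ne'
  rw [if_pos ha]
  field_simp

theorem proportion_forall_minimalPeriod_notMem_mul_le [Fintype α] {P : Finset ℕ}
    (hP : ∀ a ∈ P, 0 < a ∧ a ≤ Fintype.card α) :
    proportion {σ : Perm α | ∀ x, minimalPeriod σ x ∉ P} * ∑ a ∈ P, (1 / a : ℝ) ≤ 1 := by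
  classical
  set N : ℕ → Perm α → ℝ := fun a σ => {x | minimalPeriod σ x = a}.ncard with hN
  set X : Perm α → ℝ := fun σ => ∑ a ∈ P, 1 / a * N a σ with hX
  set μ := ∑ a ∈ P, (1 / a : ℝ)
  have expect_X : 𝔼 σ, X σ = μ := by
    rw [hX, Finset.expect_sum_comm]
    refine Finset.sum_congr rfl fun a ha => ?_
    have : NeZero a := ⟨(hP a ha).1.ne'⟩
    rw [← Finset.mul_expect, expect_ncard_setOf_minimalPeriod_eq (hP a ha).2, mul_one]
  have expect_X_sq : 𝔼 σ, X σ ^ 2 ≤ μ ^ 2 + μ := by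
    calc 𝔼 σ, X σ ^ 2
        = ∑ a ∈ P, ∑ b ∈ P, 1 / (a : ℝ) * (1 / b) * 𝔼 σ, N a σ * N b σ := by
          simp only [hX, sq, Finset.sum_mul_sum, Finset.expect_sum_comm, Finset.mul_expect,
            mul_mul_mul_comm]
      _ ≤ ∑ a ∈ P, ∑ b ∈ P, 1 / (a : ℝ) * (1 / b) * (1 + if a = b then (a : ℝ) else 0) := by
          refine Finset.sum_le_sum fun a ha => Finset.sum_le_sum fun b hb => ?_
          have : NeZero a := ⟨(hP a ha).1.ne'⟩
          have : NeZero b := ⟨(hP b hb).1.ne'⟩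
          gcongr
          exact expect_ncard_mul_ncard_setOf_minimalPeriod_le a b
      _ = μ ^ 2 + μ := sum_sum_inv_mul_one_add_ite P fun a ha => (hP a ha).1
  have chebyshev := proportion_mul_sq_expect_le (f := X) (s := {σ | ∀ x, minimalPeriod σ x ∉ P})
    fun σ hσ => Finset.sum_eq_zero fun a ha => by
      have : {x | minimalPeriod σ x = a} = ∅ :=
        Set.eq_empty_of_forall_notMem fun x hx => hσ x (hx ▸ ha)
      simp [hN, this]
  rw [expect_X] at chebyshev
  have μ_nonneg : 0 ≤ μ := Finset.sum_nonneg fun a _ => by positivity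
  obtain μ_eq | μ_pos := μ_nonneg.eq_or_lt
  · simp [← μ_eq]
  · refine le_of_mul_le_mul_right ?_ μ_pos
    linarith

end SecondMoment

section PrimeCycles

open Equiv Function

theorem exists_dvd_minimalPeriod_of_dvd_orderOf {α : Type*} [Finite α] {σ : Perm α} {p : ℕ}
    (hp : p.Prime) (h : p ∣ orderOf σ) : ∃ x, p ∣ minimalPeriod σ x := by
  have := Fintype.ofFinite α
  have orderOf_dvd : orderOf σ ∣ ∏ x, minimalPeriod σ x := by
    refine orderOf_dvd_of_pow_eq_one (Equiv.ext fun x => ?_)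
    rw [← Perm.iterate_eq_pow]
    exact isPeriodicPt_iff_minimalPeriod_dvd.2 (Finset.dvd_prod_of_mem _ (mem_univ x))
  obtain ⟨x, -, hx⟩ := hp.prime.exists_mem_finset_dvd (h.trans orderOf_dvd)
  exact ⟨x, hx⟩

variable {α : Type*} [Fintype α]

theorem exists_mem_Icc_minimalPeriod_eq_mul {σ : Perm α} {y : α} {b : ℕ}
    (h : b ∣ minimalPeriod σ y) : ∃ j ∈ Icc 1 (Fintype.card α), minimalPeriod σ y = b * j := by
  obtain ⟨j, hj⟩ := h
  have mul_pos : 0 < b * j := hj ▸ minimalPeriod_pos_of_finite σ y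
  refine ⟨j, mem_Icc.2 ⟨Nat.pos_of_mul_pos_left mul_pos, ?_⟩, hj⟩
  calc j ≤ b * j := Nat.le_mul_of_pos_left j (Nat.pos_of_mul_pos_right mul_pos)
    _ = {z | σ.SameCycle y z}.ncard := by rw [ncard_sameCycle, hj]
    _ ≤ Fintype.card α := by simpa using Set.ncard_le_card {z | σ.SameCycle y z}

theorem proportion_exists_dvd_minimalPeriod_le (b : ℕ) [NeZero b] :
    proportion {σ : Perm α | ∃ y, b ∣ minimalPeriod σ y} ≤ harmonic (Fintype.card α) / b := by
  calc proportion {σ : Perm α | ∃ y, b ∣ minimalPeriod σ y}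
      ≤ proportion (⋃ j ∈ Icc 1 (Fintype.card α), {σ : Perm α | ∃ y, minimalPeriod σ y = b * j}) :=
        proportion_mono fun σ ⟨y, hy⟩ => by
          obtain ⟨j, hj, hyj⟩ := exists_mem_Icc_minimalPeriod_eq_mul hy
          exact Set.mem_biUnion hj ⟨y, hyj⟩
    _ ≤ ∑ j ∈ Icc 1 (Fintype.card α), (1 / (b * j) : ℝ) :=
        (proportion_biUnion_le _ _).trans <| Finset.sum_le_sum fun j hj => by
          have : NeZero j := ⟨Nat.one_le_iff_ne_zero.1 (mem_Icc.1 hj).1⟩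
          exact_mod_cast proportion_exists_minimalPeriod_eq_le (α := α) (b * j)
    _ = harmonic (Fintype.card α) / b := by
        rw [harmonic_eq_sum_Icc]
        push_cast
        rw [Finset.sum_div]
        refine Finset.sum_congr rfl fun j _ => ?_
        ring

theorem proportion_exists_distinct_dvd_minimalPeriod_le (a b : ℕ) [NeZero a] [NeZero b] :
    proportion {σ : Perm α | ∃ x y, ¬ σ.SameCycle x y ∧ minimalPeriod σ x = a ∧
      b ∣ minimalPeriod σ y} ≤ harmonic (Fintype.card α) / (a * b) := by
  calc _ ≤ proportion (⋃ j ∈ Icc 1 (Fintype.card α),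
        {σ : Perm α | (distinctCyclePairs a (b * j) σ).Nonempty}) :=
        proportion_mono <| by
          rintro σ ⟨x, y, hxy, hx, hy⟩
          obtain ⟨j, hj, hyj⟩ := exists_mem_Icc_minimalPeriod_eq_mul hy
          exact Set.mem_biUnion hj ⟨(x, y), hxy, hx, hyj⟩
    _ ≤ ∑ j ∈ Icc 1 (Fintype.card α), (1 / (a * (b * j)) : ℝ) :=
        (proportion_biUnion_le _ _).trans <| Finset.sum_le_sum fun j hj => by
          have : NeZero j := ⟨Nat.one_le_iff_ne_zero.1 (mem_Icc.1 hj).1⟩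
          exact_mod_cast proportion_distinctCyclePairs_nonempty_le (α := α) a (b * j)
    _ = harmonic (Fintype.card α) / (a * b) := by
        rw [harmonic_eq_sum_Icc]
        push_cast
        rw [Finset.sum_div]
        refine Finset.sum_congr rfl fun j _ => ?_
        ring

variable [DecidableEq α]

/-- Some common exponent turns `σ` into a cycle of prime length, at most half the number of points,
and `τ` into the identity. A suitable power of `(σ, τ)` is then `(c, 1)` with a cycle `c` to which
Jordan's theorem applies. -/
def IsolatesPrimeCycle (σ τ : Perm α) : Prop :=
  ∃ M : ℕ, (σ ^ M).IsCycle ∧ (#(σ ^ M).support).Prime ∧ 2 * #(σ ^ M).support ≤ Fintype.card α ∧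
    τ ^ M = 1

theorem card_support_cycleOf_eq_minimalPeriod {σ : Perm α} {x : α} (hx : σ x ≠ x) :
    #(σ.cycleOf x).support = minimalPeriod σ x := by
  rw [← ncard_sameCycle, ← Set.ncard_coe_finset]
  congr 1
  ext y
  exact Perm.mem_support_cycleOf_iff' hx

theorem exists_pow_eq_cycleOf_pow {σ : Perm α} {x : α} {p : ℕ} (hp : p.Prime)
    (h : ∀ y, p ∣ minimalPeriod σ y → σ.SameCycle x y) :
    ∃ m, p.Coprime m ∧ ∀ k, σ ^ (m * k) = σ.cycleOf x ^ (m * k) := by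
  refine ⟨∏ y with ¬ σ.SameCycle x y, minimalPeriod σ y, ?_, fun k => Equiv.ext fun y => ?_⟩
  · refine Nat.Coprime.prod_right fun y hy => (hp.coprime_iff_not_dvd).2 fun hdvd => ?_
    exact (mem_filter.1 hy).2 (h y hdvd)
  · by_cases hy : σ.SameCycle x y
    · rw [hy.cycleOf_eq, Perm.cycleOf_pow_apply_self]
    · have σ_fix : IsPeriodicPt σ _ y := isPeriodicPt_iff_minimalPeriod_dvd.2
        (Dvd.dvd.mul_right (Finset.dvd_prod_of_mem (fun z => minimalPeriod σ z)
          (by simpa using hy : y ∈ univ.filter fun z => ¬ σ.SameCycle x z)) k)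
      have cycleOf_fix : σ.cycleOf x y = y := Perm.cycleOf_apply_of_not_sameCycle hy
      rw [← Perm.iterate_eq_pow, ← Perm.iterate_eq_pow, iterate_fixed cycleOf_fix, σ_fix]

theorem isolatesPrimeCycle_of_minimalPeriod_eq {σ τ : Perm α} {x : α} {p : ℕ} (hp : p.Prime)
    (hpα : 2 * p ≤ Fintype.card α) (hx : minimalPeriod σ x = p)
    (hσ : ∀ y, p ∣ minimalPeriod σ y → σ.SameCycle x y) (hτ : ∀ y, ¬ p ∣ minimalPeriod τ y) :
    IsolatesPrimeCycle σ τ := by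
  have moved : σ x ≠ x := fun hfix =>
    hp.one_lt.ne' (hx ▸ minimalPeriod_eq_one_iff_isFixedPt.2 hfix)
  have isCycle := Perm.isCycle_cycleOf σ moved
  have card_support : #(σ.cycleOf x).support = p :=
    (card_support_cycleOf_eq_minimalPeriod moved).trans hx
  obtain ⟨m, coprime_m, pow_eq⟩ := exists_pow_eq_cycleOf_pow hp hσ
  have coprime_orderOf : p.Coprime (orderOf τ) := (hp.coprime_iff_not_dvd).2 fun hdvd =>
    (exists_dvd_minimalPeriod_of_dvd_orderOf hp hdvd).elim hτ
  have coprime : (m * orderOf τ).Coprime (orderOf (σ.cycleOf x)) := by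
    rw [isCycle.orderOf, card_support]
    exact (coprime_m.mul_right coprime_orderOf).symm
  refine ⟨m * orderOf τ, ?_⟩
  rw [pow_eq, Perm.support_pow_coprime coprime, card_support]
  refine ⟨isCycle.pow_iff.2 coprime, hp, hpα, ?_⟩
  rw [mul_comm, pow_mul, pow_orderOf_eq_one, one_pow]

theorem setOf_not_isolatesPrimeCycle_subset {P : Finset ℕ}
    (hP : ∀ p ∈ P, p.Prime ∧ 2 * p ≤ Fintype.card α) :
    {q : Perm α × Perm α | ¬ IsolatesPrimeCycle q.1 q.2} ⊆
      {σ : Perm α | ∀ x, minimalPeriod σ x ∉ P} ×ˢ Set.univ ∪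
        ⋃ p ∈ P, ({σ : Perm α | ∃ x y, ¬ σ.SameCycle x y ∧ minimalPeriod σ x = p ∧
            p ∣ minimalPeriod σ y} ×ˢ Set.univ ∪
          {σ : Perm α | ∃ x, minimalPeriod σ x = p} ×ˢ
            {τ : Perm α | ∃ y, p ∣ minimalPeriod τ y}) := by
  rintro ⟨σ, τ⟩ hq
  by_contra! hcover
  simp only [Set.mem_union, Set.mem_prod, Set.mem_univ, and_true, Set.mem_iUnion, not_or,
    not_exists, not_and, exists_prop] at hcover
  obtain ⟨x, hx⟩ : ∃ x, minimalPeriod σ x ∈ P := by simpa using hcover.1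
  obtain ⟨not_twice, not_divided⟩ := hcover.2 _ hx
  refine hq (isolatesPrimeCycle_of_minimalPeriod_eq (hP _ hx).1 (hP _ hx).2 rfl
    (fun y hy => ?_) fun y hy => not_divided ⟨x, rfl⟩ ⟨y, hy⟩)
  by_contra hxy
  exact not_twice ⟨x, y, hxy, rfl, hy⟩

theorem proportion_not_isolatesPrimeCycle_le {P : Finset ℕ} (hP_ne : P.Nonempty)
    (hP : ∀ p ∈ P, p.Prime ∧ 2 * p ≤ Fintype.card α) :
    proportion {q : Perm α × Perm α | ¬ IsolatesPrimeCycle q.1 q.2} ≤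
      (∑ p ∈ P, (1 / p : ℝ))⁻¹ + 2 * harmonic (Fintype.card α) * ∑ p ∈ P, (1 / p ^ 2 : ℝ) := by
  refine (proportion_mono (setOf_not_isolatesPrimeCycle_subset hP)).trans
    ((proportion_union_le _ _).trans (add_le_add ?_ ?_))
  · have sum_pos : 0 < ∑ p ∈ P, (1 / p : ℝ) := Finset.sum_pos
      (fun p hp => one_div_pos.2 (by exact_mod_cast (hP p hp).1.pos)) hP_ne
    rw [proportion_prod, proportion_univ, mul_one, ← one_div, le_div_iff₀ sum_pos]
    exact proportion_forall_minimalPeriod_notMem_mul_le fun p hp =>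
      ⟨(hP p hp).1.pos, by have := (hP p hp).2; lia⟩
  · rw [Finset.mul_sum]
    refine (proportion_biUnion_le _ _).trans (Finset.sum_le_sum fun p hp => ?_)
    have : NeZero p := ⟨(hP p hp).1.ne_zero⟩
    refine (proportion_union_le _ _).trans ?_
    rw [proportion_prod, proportion_prod, proportion_univ, mul_one]
    calc _ ≤ (harmonic (Fintype.card α) / (p * p) : ℝ) +
          1 / p * (harmonic (Fintype.card α) / p) := by
          gcongr
          · exact proportion_exists_distinct_dvd_minimalPeriod_le p p
          · exact proportion_nonneg _
          · exact proportion_exists_minimalPeriod_eq_le p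
          · exact proportion_exists_dvd_minimalPeriod_le p
      _ = 2 * harmonic (Fintype.card α) * (1 / p ^ 2) := by ring

end PrimeCycles

section PermutationGroups

open Equiv MulAction

section Jordan

variable {α : Type*} [Fintype α] [DecidableEq α]

theorem isThreeCycle_inv_mul_conj {c g : Perm α} {x y : α} (hx : x ∈ c.support)
    (hy : y ∉ c.support) (hg : ∀ z ∈ c.support, g z = swap x y z) :
    (c⁻¹ * (g * c * g⁻¹)).IsThreeCycle := by
  have disjoint : ((swap x y)⁻¹ * g).Disjoint c := fun z => by
    by_cases hz : z ∈ c.support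
    · exact Or.inl (by simp [hg z hz])
    · exact Or.inr (Perm.notMem_support.1 hz)
  have conj_eq : g * c * g⁻¹ = swap x y * c * (swap x y)⁻¹ := calc
    g * c * g⁻¹ = swap x y * ((swap x y)⁻¹ * g * c) * g⁻¹ := by group
    _ = swap x y * (c * ((swap x y)⁻¹ * g)) * g⁻¹ := by rw [disjoint.commute.eq]
    _ = swap x y * c * (swap x y)⁻¹ := by group
  have y_fixed : c⁻¹ y = y := Perm.inv_eq_iff_eq.2 (Perm.notMem_support.1 hy).symm
  have x_moved : c⁻¹ x ≠ x := fun h => Perm.mem_support.1 hx (Perm.inv_eq_iff_eq.1 h).symm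
  have swap_conj : c⁻¹ * swap x y * c = swap (c⁻¹ x) y := by
    simpa [y_fixed] using (swap_apply_apply c⁻¹ x y).symm
  have xy : x ≠ y := fun h => hy (h ▸ hx)
  rw [conj_eq, swap_inv, ← mul_assoc, ← mul_assoc, swap_conj, swap_comm _ y, swap_comm x y]
  refine Perm.isThreeCycle_swap_mul_swap_same (fun h => xy ?_) xy.symm x_moved
  rw [← c⁻¹.injective.eq_iff, y_fixed, h]

theorem isMultiplyPretransitive_of_isCycle_mem {G : Subgroup (Perm α)} (hG : IsPreprimitive G α)
    {c : Perm α} (hc : c.IsCycle) (hcp : (#c.support).Prime) (hcα : #c.support < Fintype.card α)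
    (hcG : c ∈ G) : IsMultiplyPretransitive G α (Fintype.card α - #c.support + 1) := by
  have card_compl : ((c.support : Set α)ᶜ).ncard = (Fintype.card α - #c.support - 1) + 1 := by
    rw [Set.ncard_compl, Set.ncard_coe_finset, Nat.card_eq_fintype_card]
    lia
  have card_moved :
      Nat.card (SubMulAction.ofFixingSubgroup G (c.support : Set α)ᶜ) = #c.support := by
    rw [← Set.ncard_coe_finset, ← Nat.card_coe_set_eq]
    exact Nat.card_congr (Equiv.subtypeEquivRight fun x => by
      simp [SubMulAction.mem_ofFixingSubgroup_iff])
  have := Perm.isPretransitive_of_isCycle_mem (G := G) hc hcG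
  have prim_moved : IsPreprimitive (fixingSubgroup G (c.support : Set α)ᶜ)
      (SubMulAction.ofFixingSubgroup G (c.support : Set α)ᶜ) :=
    IsPreprimitive.of_prime_card (card_moved ▸ hcp)
  have := hG.isMultiplyPreprimitive card_compl
    (by rw [Nat.card_eq_fintype_card]; have := hcp.two_le; lia) prim_moved
  convert this.isMultiplyPretransitive using 1
  lia

theorem alternatingGroup_le_of_isPreprimitive_of_isCycle_mem {G : Subgroup (Perm α)}
    (hG : IsPreprimitive G α) {c : Perm α} (hc : c.IsCycle) (hcp : (#c.support).Prime)
    (hcα : 2 * #c.support ≤ Fintype.card α + 1) (hcG : c ∈ G) : alternatingGroup α ≤ G := by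
  have two_le := hcp.two_le
  have := isMultiplyPretransitive_of_isCycle_mem hG hc hcp (by lia) hcG
  have transitive : IsMultiplyPretransitive G α (#c.support) :=
    isMultiplyPretransitive_of_le' (n := Fintype.card α - #c.support + 1) (by lia)
      (by rw [ENat.card_eq_coe_fintype_card]; norm_cast; lia)
  obtain ⟨x, hx⟩ := hc.nonempty_support
  obtain ⟨y, hy⟩ : ∃ y, y ∉ c.support := by
    by_contra! h
    rw [Finset.eq_univ_of_forall h, card_univ] at hcα two_le
    lia
  let f : Fin #c.support ↪ α := c.support.equivFin.symm.toEmbedding.trans (.subtype _)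
  obtain ⟨g, hg⟩ := transitive.exists_smul_eq f (f.trans (swap x y).toEmbedding)
  have eqOn_swap (z) (hz : z ∈ c.support) : (g : Perm α) z = swap x y z := by
    simpa [f, Subgroup.smul_def] using DFunLike.congr_fun hg (c.support.equivFin ⟨z, hz⟩)
  exact Perm.alternatingGroup_le_of_isPreprimitive_of_isThreeCycle_mem hG
    (isThreeCycle_inv_mul_conj hx hy eqOn_swap)
    (G.mul_mem (G.inv_mem hcG) (G.mul_mem (G.mul_mem g.2 hcG) (G.inv_mem g.2)))

theorem eq_top_of_alternatingGroup_le {G : Subgroup (Perm α)} (hG : alternatingGroup α ≤ G)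
    {σ : Perm α} (hσG : σ ∈ G) (hσ : Perm.sign σ = -1) : G = ⊤ := by
  refine eq_top_iff.2 fun a _ => ?_
  obtain h | h := Int.units_eq_one_or (Perm.sign a)
  · exact hG (Perm.mem_alternatingGroup.2 h)
  · have mem : a * σ⁻¹ ∈ G := hG (Perm.mem_alternatingGroup.2 (by simp [h, hσ]))
    simpa using G.mul_mem mem hσG

theorem alternatingGroup_le_goursatFst (hα : 5 ≤ Fintype.card α)
    {I : Subgroup (Perm α × Perm α)} (hI : I.map (MonoidHom.fst _ _) = ⊤) {c : Perm α}
    (hc : c ≠ 1) (hcI : (c, 1) ∈ I) : alternatingGroup α ≤ I.goursatFst := by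
  have surjective : Function.Surjective (Prod.fst ∘ I.subtype) := fun a => by
    obtain ⟨q, hq, rfl⟩ := hI.ge (Subgroup.mem_top a)
    exact ⟨⟨q, hq⟩, rfl⟩
  have := Subgroup.normal_goursatFst surjective
  refine Perm.alternatingGroup_le_of_normal (by rwa [Nat.card_eq_fintype_card]) ?_
  exact (Subgroup.nontrivial_iff_exists_ne_one _).2 ⟨c, Subgroup.mem_goursatFst.2 hcI, hc⟩

theorem alternatingGroup_le_goursatSnd (hα : 5 ≤ Fintype.card α)
    {I : Subgroup (Perm α × Perm α)} (hI : I.map (MonoidHom.snd _ _) = ⊤) {c : Perm α}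
    (hc : c ≠ 1) (hcI : (1, c) ∈ I) : alternatingGroup α ≤ I.goursatSnd := by
  have surjective : Function.Surjective (Prod.snd ∘ I.subtype) := fun a => by
    obtain ⟨q, hq, rfl⟩ := hI.ge (Subgroup.mem_top a)
    exact ⟨⟨q, hq⟩, rfl⟩
  have := Subgroup.normal_goursatSnd surjective
  refine Perm.alternatingGroup_le_of_normal (by rwa [Nat.card_eq_fintype_card]) ?_
  exact (Subgroup.nontrivial_iff_exists_ne_one _).2 ⟨c, Subgroup.mem_goursatSnd.2 hcI, hc⟩

end Jordan

variable {k : ℕ} {σ τ : Perm (Fin k)}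

theorem mem_equalSignSubgroup {q : Perm (Fin k) × Perm (Fin k)} :
    q ∈ equalSignSubgroup k ↔ Perm.sign q.1 = Perm.sign q.2 := by
  rw [equalSignSubgroup, MonoidHom.mem_ker]
  simp [mul_eq_one_iff_eq_inv]

theorem circGenPair_le_iff {I : Subgroup (Perm (Fin k) × Perm (Fin k))} :
    circGenPair σ τ ≤ I ↔ (σ, τ) ∈ I ∧ (τ, σ) ∈ I := by
  rw [circGenPair, Subgroup.closure_le, Set.pair_subset_iff]
  rfl

theorem map_fst_circGenPair :
    (circGenPair σ τ).map (MonoidHom.fst _ _) = Subgroup.closure {σ, τ} := by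
  simp [circGenPair, MonoidHom.map_closure, Set.image_pair]

theorem map_snd_circGenPair :
    (circGenPair σ τ).map (MonoidHom.snd _ _) = Subgroup.closure {σ, τ} := by
  simp [circGenPair, MonoidHom.map_closure, Set.image_pair, Set.pair_comm]

theorem circGenPair_eq_equalSignSubgroup (hk : 5 ≤ k) (hσ : Perm.sign σ = -1)
    (hτ : Perm.sign τ = -1) (hprim : IsPreprimitive (Subgroup.closure {σ, τ}) (Fin k))
    (hiso : IsolatesPrimeCycle σ τ) : circGenPair σ τ = equalSignSubgroup k := by
  obtain ⟨M, isCycle, prime, two_mul_le, hτM⟩ := hiso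
  obtain ⟨mem, mem_swap⟩ := circGenPair_le_iff.1 (le_refl (circGenPair σ τ))
  have hσ_mem : σ ∈ Subgroup.closure {σ, τ} := Subgroup.subset_closure (Set.mem_insert σ _)
  have closure_eq_top : Subgroup.closure {σ, τ} = ⊤ := eq_top_of_alternatingGroup_le
    (alternatingGroup_le_of_isPreprimitive_of_isCycle_mem hprim isCycle prime
      (two_mul_le.trans (Nat.le_succ _)) (Subgroup.pow_mem _ hσ_mem M)) hσ_mem hσ
  have alternating_prod_le : (alternatingGroup (Fin k)).prod (alternatingGroup (Fin k)) ≤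
      circGenPair σ τ :=
    (Subgroup.prod_mono
      (alternatingGroup_le_goursatFst (by simpa) (map_fst_circGenPair.trans closure_eq_top)
        isCycle.ne_one (by simpa [hτM] using Subgroup.pow_mem _ mem M))
      (alternatingGroup_le_goursatSnd (by simpa) (map_snd_circGenPair.trans closure_eq_top)
        isCycle.ne_one (by simpa [hτM] using Subgroup.pow_mem _ mem_swap M))).trans
      (Subgroup.goursatFst_prod_goursatSnd_le _)
  refine le_antisymm (circGenPair_le_iff.2 ⟨?_, ?_⟩) fun ⟨a, b⟩ hab => ?_
  · exact mem_equalSignSubgroup.2 (hσ.trans hτ.symm)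
  · exact mem_equalSignSubgroup.2 (hτ.trans hσ.symm)
  · have sign_eq : Perm.sign a = Perm.sign b := mem_equalSignSubgroup.1 hab
    obtain h | h := Int.units_eq_one_or (Perm.sign b)
    · exact alternating_prod_le ⟨sign_eq.trans h, h⟩
    · have even : (a * σ⁻¹, b * τ⁻¹) ∈ circGenPair σ τ := alternating_prod_le
        ⟨Perm.mem_alternatingGroup.2 (by simp [sign_eq, h, hσ]),
          Perm.mem_alternatingGroup.2 (by simp [h, hτ])⟩
      simpa using Subgroup.mul_mem _ even mem

theorem sign_eq_neg_one_of_circGenPair_eq (hk : 2 ≤ k)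
    (h : circGenPair σ τ = equalSignSubgroup k) : Perm.sign σ = -1 ∧ Perm.sign τ = -1 := by
  have sign_eq : Perm.sign σ = Perm.sign τ :=
    mem_equalSignSubgroup.1 (h ▸ (circGenPair_le_iff.1 le_rfl).1)
  suffices hσ : Perm.sign σ ≠ 1 by
    have hσ := (Int.units_eq_one_or _).resolve_left hσ
    exact ⟨hσ, sign_eq ▸ hσ⟩
  intro hσ
  have le_alternating : equalSignSubgroup k ≤ (alternatingGroup (Fin k)).prod ⊤ :=
    h ▸ circGenPair_le_iff.2 ⟨⟨hσ, trivial⟩, ⟨sign_eq.symm.trans hσ, trivial⟩⟩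
  let s : Perm (Fin k) := swap ⟨0, by lia⟩ ⟨1, by lia⟩
  have sign_s : Perm.sign s = -1 := Perm.sign_swap (by simp)
  have s_even : Perm.sign s = 1 := (le_alternating (mem_equalSignSubgroup.2 rfl : (s, s) ∈ _)).1
  exact absurd (sign_s.symm.trans s_even) (by decide)

end PermutationGroups

section Primitivity

open Equiv MulAction
open scoped Pointwise

variable {α : Type*}

theorem exists_perm_smul_eq [Finite α] {ι : Type*} {s t : ι → Set α} (hs : ∀ a, ∃! i, a ∈ s i)
    (ht : ∀ a, ∃! i, a ∈ t i) (hst : ∀ i, (s i).ncard = (t i).ncard) :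
    ∃ g : Perm α, ∀ i, g • s i = t i := by
  have equiv (i : ι) : Nonempty (s i ≃ t i) :=
    Finite.card_eq.1 (by simpa only [Nat.card_coe_set_eq] using hst i)
  let e (i : ι) : s i ≃ t i := (equiv i).some
  let g : Perm α :=
    (Set.sigmaEquiv s hs).symm.trans ((Equiv.sigmaCongrRight e).trans (Set.sigmaEquiv t ht))
  have g_apply (i : ι) (x : s i) : g x = e i x := by
    rw [show (x : α) = Set.sigmaEquiv s hs ⟨i, x⟩ from rfl]
    simp only [g, Equiv.trans_apply, Equiv.symm_apply_apply]
    rfl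
  refine ⟨g, fun i => Set.eq_of_subset_of_ncard_le ?_ (by rw [Set.ncard_smul_set, hst])⟩
  rintro _ ⟨x, hx, rfl⟩
  exact Set.mem_of_eq_of_mem (g_apply i ⟨x, hx⟩) (e i ⟨x, hx⟩).2

/-- The partitions of `α` into blocks of size `d`, with the action of the permutations of `α`. They
are the structures that can be preserved by a transitive imprimitive group. -/
def equipartitions (α : Type*) (d : ℕ) : SubMulAction (Perm α) (Set (Set α)) where
  carrier := {C | Setoid.IsPartition C ∧ ∀ B ∈ C, B.ncard = d}
  smul_mem' g C := by
    rintro ⟨⟨empty_notMem, exists_block⟩, ncard_block⟩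
    refine ⟨⟨?_, fun a => ?_⟩, ?_⟩
    · rwa [Set.mem_smul_set_iff_inv_smul_mem, Set.smul_set_empty]
    · obtain ⟨B, ⟨hB, ha⟩, unique⟩ := exists_block (g⁻¹ • a)
      refine ⟨g • B, ⟨Set.smul_mem_smul_set hB, Set.mem_smul_set_iff_inv_smul_mem.2 ha⟩, ?_⟩
      rintro _ ⟨⟨B', hB', rfl⟩, ha'⟩
      exact congrArg (g • ·) (unique B' ⟨hB', Set.mem_smul_set_iff_inv_smul_mem.1 ha'⟩)
    · rintro _ ⟨B, hB, rfl⟩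
      exact (Set.ncard_smul_set g B).trans (ncard_block B hB)

variable {d : ℕ}

theorem existsUnique_mem_block (C : equipartitions α d) (a : α) :
    ∃! B : (C : Set (Set α)), a ∈ (B : Set α) := by
  obtain ⟨B, ⟨hB, ha⟩, unique⟩ := C.2.1.2 a
  exact ⟨⟨B, hB⟩, ha, fun B' ha' => Subtype.ext (unique B' ⟨B'.2, ha'⟩)⟩

theorem ncard_equipartition_mul [Finite α] (C : equipartitions α d) :
    (C : Set (Set α)).ncard * d = Nat.card α := by
  have := Fintype.ofFinite (C : Set (Set α))
  have card_block (B : (C : Set (Set α))) : Nat.card (B : Set α) = d := C.2.2 B B.2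
  rw [← Nat.card_congr (Set.sigmaEquiv _ (existsUnique_mem_block C)), Nat.card_sigma]
  simp only [card_block, sum_const, card_univ, smul_eq_mul]
  rw [← Nat.card_coe_set_eq, Nat.card_eq_fintype_card]

theorem isPretransitive_equipartitions [Finite α] (hd : d ≠ 0) :
    IsPretransitive (Perm α) (equipartitions α d) where
  exists_smul_eq C C' := by
    have ncard_eq : (C : Set (Set α)).ncard = (C' : Set (Set α)).ncard :=
      mul_right_cancel₀ hd ((ncard_equipartition_mul C).trans (ncard_equipartition_mul C').symm)
    obtain ⟨e⟩ : Nonempty ((C : Set (Set α)) ≃ (C' : Set (Set α))) := Finite.card_eq.1 ncard_eq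
    obtain ⟨g, hg⟩ := exists_perm_smul_eq (existsUnique_mem_block C)
      (t := fun B => (e B : Set α))
      (fun a => e.existsUnique_congr_left.2 (by simpa using existsUnique_mem_block C' a))
      (fun B => (C.2.2 B B.2).trans (C'.2.2 (e B) (e B).2).symm)
    refine ⟨g, Subtype.ext (Set.eq_of_subset_of_ncard_le ?_ ?_)⟩
    · rintro _ ⟨B, hB, rfl⟩
      exact Set.mem_of_eq_of_mem (hg ⟨B, hB⟩) (e ⟨B, hB⟩).2
    · rw [SubMulAction.val_smul, Set.ncard_smul_set, ncard_eq]

theorem exists_mem_equipartition [Finite α] [Nonempty (equipartitions α d)]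
    {s : Finset α} (hs : s.Nonempty) (hd : #s = d) :
    ∃ C : equipartitions α d, (s : Set α) ∈ (C : Set (Set α)) := by
  classical
  obtain ⟨C⟩ := ‹Nonempty (equipartitions α d)›
  obtain ⟨B, -⟩ := (existsUnique_mem_block C hs.choose).exists
  have card_B : #(B : Set α).toFinite.toFinset = d := by
    rw [← Set.ncard_eq_toFinset_card _ (B : Set α).toFinite]
    exact C.2.2 B B.2
  obtain ⟨g, hg⟩ := (Set.powersetCard.isPretransitive (α := α) (n := d)).exists_smul_eq
    (Set.powersetCard.ofCard card_B) (Set.powersetCard.ofCard hd)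
  have g_smul_B : g • (B : Set α) = s := by
    simpa using congrArg (fun t : Set.powersetCard α d => ((t : Finset α) : Set α)) hg
  exact ⟨g • C, g_smul_B ▸ Set.smul_mem_smul_set B.2⟩

theorem choose_le_card_equipartitions [Fintype α] [Nonempty (equipartitions α (d + 1))] (a : α) :
    (Fintype.card α - 1).choose d ≤ Nat.card (equipartitions α (d + 1)) := by
  classical
  have notMem {t : Finset α} (ht : t ∈ powersetCard d (univ.erase a)) : a ∉ t := fun ha =>
    notMem_erase a univ ((mem_powersetCard.1 ht).1 ha)
  have exists_partition (t : Finset α) (ht : t ∈ powersetCard d (univ.erase a)) :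
      ∃ C : equipartitions α (d + 1), ((insert a t : Finset α) : Set α) ∈ (C : Set (Set α)) :=
    exists_mem_equipartition (insert_nonempty a t)
      (by rw [card_insert_of_notMem (notMem ht), (mem_powersetCard.1 ht).2])
  choose! C hC using exists_partition
  have C_injOn : Set.InjOn C (powersetCard d (univ.erase a)) := fun t ht t' ht' h => by
    have insert_eq : (insert a t : Finset α) = (insert a t' : Finset α) :=
      coe_injective <| ((C t).2.1.2 a).unique ⟨hC t ht, by simp⟩ ⟨h ▸ hC t' ht', by simp⟩
    rw [← erase_insert (notMem ht), insert_eq, erase_insert (notMem ht')]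
  calc (Fintype.card α - 1).choose d = (powersetCard d (univ.erase a) : Set (Finset α)).ncard := by
        rw [Set.ncard_coe_finset, card_powersetCard, card_erase_of_mem (mem_univ a), card_univ]
    _ ≤ (Set.univ : Set (equipartitions α (d + 1))).ncard :=
        Set.ncard_le_ncard_of_injOn C (fun _ _ => Set.mem_univ _) C_injOn
    _ = Nat.card (equipartitions α (d + 1)) := Set.ncard_univ _

variable {H : Subgroup (Perm α)}

theorem exists_powersetCard_smul_eq [Fintype α] [DecidableEq α] (h : ¬ IsPretransitive H α) :
    ∃ i ∈ Ioo 0 (Fintype.card α), ∃ s : Set.powersetCard α i, ∀ g ∈ H, g • s = s := by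
  obtain ⟨x, y, hy⟩ : ∃ x y : α, y ∉ orbit H x := by
    by_contra! mem_orbit
    exact h ⟨mem_orbit⟩
  let s : Finset α := (orbit H x).toFinite.toFinset
  have coe_s : (s : Set α) = orbit H x := Set.Finite.coe_toFinset _
  have s_pos : 0 < #s := card_pos.2 ⟨x, by simp [← mem_coe, coe_s]⟩
  have s_lt : #s < Fintype.card α := card_lt_univ_of_notMem (x := y) (by simpa [← mem_coe, coe_s])
  refine ⟨#s, mem_Ioo.2 ⟨s_pos, s_lt⟩, Set.powersetCard.ofCard rfl, fun g hg => Subtype.ext ?_⟩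
  rw [Set.powersetCard.coe_smul]
  apply coe_injective
  rw [coe_smul_finset, Set.powersetCard.val_ofCard, coe_s]
  exact smul_orbit (⟨g, hg⟩ : H) x

theorem exists_equipartition_smul_eq [Fintype α] [IsPretransitive H α]
    (h : ¬ IsPreprimitive H α) : ∃ i ∈ Ioo 0 (Fintype.card α - 1),
      ∃ C : equipartitions α (i + 1), ∀ g ∈ H, g • C = C := by
  obtain ⟨B, hB, nontrivial⟩ : ∃ B : Set α, IsBlock H B ∧ ¬ IsTrivialBlock B := by
    by_contra! trivial
    exact h ⟨fun {B} hB => trivial B hB⟩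
  rw [IsTrivialBlock, not_or] at nontrivial
  have one_lt : 1 < B.ncard := by
    rw [← not_le, Set.ncard_le_one_iff_subsingleton]
    exact nontrivial.1
  have lt_card : B.ncard < Fintype.card α :=
    (Set.ncard_lt_card nontrivial.2).trans_eq Nat.card_eq_fintype_card
  have B_nonempty : B.Nonempty := Set.nonempty_of_ncard_ne_zero (by omega)
  refine ⟨B.ncard - 1, mem_Ioo.2 (by omega), ⟨orbit H B, ?_, ?_⟩, fun g hg => Subtype.ext ?_⟩
  · exact (hB.isBlockSystem B_nonempty).1
  · rintro _ ⟨g, rfl⟩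
    rw [Nat.sub_add_cancel one_lt.le]
    exact Set.ncard_smul_set g B
  · exact smul_orbit (⟨g, hg⟩ : H) B

theorem proportion_exists_equipartition_smul_eq_le [Fintype α] {i : ℕ}
    (hi : i + 1 < Fintype.card α) :
    proportion {q : Perm α × Perm α |
        ∃ C : equipartitions α (i + 1), q.1 • C = C ∧ q.2 • C = C} ≤
      1 / (Fintype.card α - 1).choose i := by
  have := isPretransitive_equipartitions (α := α) i.succ_ne_zero
  refine proportion_exists_common_fixedPoint_le.trans ?_
  rcases isEmpty_or_nonempty (equipartitions α (i + 1)) with _ | _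
  · rw [Nat.card_of_isEmpty, Nat.cast_zero, div_zero]
    positivity
  obtain ⟨a⟩ : Nonempty α := Fintype.card_pos_iff.1 (by omega)
  have choose_pos : 0 < (Fintype.card α - 1).choose i := Nat.choose_pos (by omega)
  gcongr
  exact choose_le_card_equipartitions a

theorem proportion_not_isPreprimitive_le [Fintype α] :
    proportion {q : Perm α × Perm α | ¬ IsPreprimitive (Subgroup.closure {q.1, q.2}) α} ≤
      ∑ i ∈ Ioo 0 (Fintype.card α), (1 / (Fintype.card α).choose i : ℝ) +
        ∑ i ∈ Ioo 0 (Fintype.card α - 1), (1 / (Fintype.card α - 1).choose i : ℝ) := by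
  classical
  have subset : {q : Perm α × Perm α | ¬ IsPreprimitive (Subgroup.closure {q.1, q.2}) α} ⊆
      (⋃ i ∈ Ioo 0 (Fintype.card α),
        {q | ∃ s : Set.powersetCard α i, q.1 • s = s ∧ q.2 • s = s}) ∪
      ⋃ i ∈ Ioo 0 (Fintype.card α - 1),
        {q | ∃ C : equipartitions α (i + 1), q.1 • C = C ∧ q.2 • C = C} := by
    intro q hq
    have mem_fst : q.1 ∈ Subgroup.closure {q.1, q.2} := Subgroup.subset_closure (by simp)
    have mem_snd : q.2 ∈ Subgroup.closure {q.1, q.2} := Subgroup.subset_closure (by simp)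
    by_cases transitive : IsPretransitive (Subgroup.closure {q.1, q.2}) α
    · obtain ⟨i, hi, C, hC⟩ := exists_equipartition_smul_eq hq
      exact Or.inr (Set.mem_iUnion₂.2 ⟨i, hi, C, hC _ mem_fst, hC _ mem_snd⟩)
    · obtain ⟨i, hi, s, hs⟩ := exists_powersetCard_smul_eq transitive
      exact Or.inl (Set.mem_iUnion₂.2 ⟨i, hi, s, hs _ mem_fst, hs _ mem_snd⟩)
  refine (proportion_mono subset).trans ((proportion_union_le _ _).trans (add_le_add ?_ ?_))
  · refine (proportion_biUnion_le _ _).trans (sum_le_sum fun i _ => ?_)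
    have := Set.powersetCard.isPretransitive (α := α) (n := i)
    refine proportion_exists_common_fixedPoint_le.trans_eq ?_
    rw [Set.powersetCard.card, Nat.card_eq_fintype_card]
  · refine (proportion_biUnion_le _ _).trans (sum_le_sum fun i hi => ?_)
    exact proportion_exists_equipartition_smul_eq_le (by have := mem_Ioo.1 hi; omega)

end Primitivity

section Binomials

theorem choose_le_choose_of_le_of_le_sub {n i j : ℕ} (hij : i ≤ j) (hji : j ≤ n - i) :
    n.choose i ≤ n.choose j := by
  have of_le_half (m : ℕ) (him : i ≤ m) : m ≤ n / 2 → n.choose i ≤ n.choose m := by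
    induction m, him using Nat.le_induction with
    | base => exact fun _ => le_rfl
    | succ m _ ih =>
      exact fun hm => (ih (by omega)).trans (Nat.choose_le_succ_of_lt_half_left (by omega))
  obtain hj | hj := le_or_gt j (n / 2)
  · exact of_le_half j hij hj
  · rw [← Nat.choose_symm (show j ≤ n by omega)]
    exact of_le_half (n - j) (by omega) (by omega)

theorem sum_Ioo_one_div_choose_le (n : ℕ) : ∑ i ∈ Ioo 0 n, (1 / n.choose i : ℝ) ≤ 4 / n := by
  obtain hn | hn := lt_or_ge n 2
  · have empty : Ioo 0 n = ∅ := eq_empty_of_forall_notMem fun i hi => by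
      have := mem_Ioo.1 hi
      omega
    rw [empty, sum_empty]
    positivity
  have one_lt : (1 : ℝ) < n := by exact_mod_cast hn
  have term_le {i : ℕ} (hi : i ∈ Ioo 0 n) : (1 / n.choose i : ℝ) ≤
      (if i = 1 then 1 / n else 0 : ℝ) + (if i = n - 1 then 1 / n else 0 : ℝ) +
        2 / (n * (n - 1)) := by
    have : (0 : ℝ) ≤ 2 / (n * (n - 1)) := div_nonneg two_pos.le (by nlinarith)
    obtain ⟨i_pos, i_lt⟩ := mem_Ioo.1 hi
    by_cases first : i = 1
    · rw [if_pos first, first, Nat.choose_one_right]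
      split_ifs <;> linarith [show (0 : ℝ) ≤ 1 / n by positivity]
    by_cases last : i = n - 1
    · rw [if_neg first, if_pos last, last, Nat.choose_symm (by omega), Nat.choose_one_right]
      linarith
    · have choose_two_le : (n.choose 2 : ℝ) ≤ n.choose i := by
        exact_mod_cast choose_le_choose_of_le_of_le_sub (show 2 ≤ i by omega) (by omega)
      rw [if_neg first, if_neg last, zero_add, zero_add, ← one_div_div (n * (n - 1) : ℝ),
        ← Nat.cast_choose_two]
      have : 0 < n.choose 2 := Nat.choose_pos hn
      gcongr
  have first_mem : 1 ∈ Ioo 0 n := mem_Ioo.2 (by omega)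
  have last_mem : n - 1 ∈ Ioo 0 n := mem_Ioo.2 (by omega)
  calc ∑ i ∈ Ioo 0 n, (1 / n.choose i : ℝ)
      ≤ 1 / n + 1 / n + (n - 1 : ℕ) * (2 / (n * (n - 1))) := by
        refine (sum_le_sum fun i hi => term_le hi).trans_eq ?_
        simp [sum_add_distrib, first_mem, last_mem]
    _ = 4 / n := by
        rw [Nat.cast_pred (by omega)]
        have : (n : ℝ) - 1 ≠ 0 := by linarith
        field_simp
        norm_num

theorem tendsto_sum_Ioo_one_div_choose :
    Tendsto (fun n : ℕ => ∑ i ∈ Ioo 0 n, (1 / n.choose i : ℝ)) atTop (nhds 0) :=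
  squeeze_zero (fun _ => by positivity) sum_Ioo_one_div_choose_le
    (tendsto_const_div_atTop_nhds_zero_nat 4)

end Binomials

section PrimeReciprocals

open Chebyshev (theta)
open Real (log)

theorem theta_sub_theta_eq_sum {m n : ℕ} (hmn : m ≤ n) :
    theta n - theta m = ∑ p ∈ Ioc m n with Nat.Prime p, log p := by
  simp only [theta, Nat.floor_natCast, sum_filter]
  rw [sub_eq_iff_eq_add', sum_Ioc_consecutive _ m.zero_le hmn]

theorem theta_sub_theta_div_le_sum_one_div {m n : ℕ} (hmn : m ≤ n) (hn : 2 ≤ n) :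
    (theta n - theta m) / (n * log n) ≤ ∑ p ∈ Ioc m n with Nat.Prime p, (1 / p : ℝ) := by
  have log_pos : 0 < log n := Real.log_pos (by exact_mod_cast hn)
  rw [theta_sub_theta_eq_sum hmn, sum_div]
  refine sum_le_sum fun p hp => ?_
  obtain ⟨hp_mem, hp⟩ := mem_filter.1 hp
  have p_pos : (0 : ℝ) < p := by exact_mod_cast hp.pos
  have p_le : (p : ℝ) ≤ n := by exact_mod_cast (mem_Ioc.1 hp_mem).2
  rw [div_le_div_iff₀ (by positivity) p_pos, one_mul, mul_comm]
  gcongr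

theorem add_mul_two_pow_le_four_pow {j : ℕ} (hj : 7 ≤ j) :
    2 * (j + 2) + 8 * (j + 1) * 2 ^ j ≤ 4 ^ j := by
  have linear_le : 8 * (j + 1) + 1 ≤ 2 ^ j := by
    induction j, hj using Nat.le_induction with
    | base => norm_num
    | succ i _ ih => rw [pow_succ]; omega
  rw [show 4 ^ j = 2 ^ j * 2 ^ j by rw [← mul_pow]; norm_num]
  nlinarith

theorem four_pow_mul_log_two_le_theta_sub_theta {j : ℕ} (hj : 7 ≤ j) :
    4 ^ j * log 2 ≤ theta (4 ^ (j + 1)) - theta (4 ^ j) := by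
  have log_two_pos : 0 < log 2 := Real.log_pos one_lt_two
  have log_four_pow (i : ℕ) : log (4 ^ i) = 2 * i * log 2 := by
    rw [show (4 : ℝ) ^ i = 2 ^ (2 * i) by rw [pow_mul]; norm_num, Real.log_pow]
    push_cast
    ring
  have log_four : log 4 = 2 * log 2 := by simpa using log_four_pow 1
  have sqrt_four_pow : √(4 ^ (j + 1)) = 2 * 2 ^ j := by
    rw [show (4 : ℝ) ^ (j + 1) = (2 * 2 ^ j) ^ 2 by rw [← pow_succ', ← pow_mul', pow_mul]; norm_num,
      Real.sqrt_sq (by positivity)]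
  have upper : theta (4 ^ j) ≤ 2 * log 2 * 4 ^ j := by
    rw [← log_four]
    exact Chebyshev.theta_le_log4_mul_x (by positivity)
  have lower : 4 ^ (j + 1) * log 2 - 2 * (j + 2) * log 2 - 8 * (j + 1) * 2 ^ j * log 2 ≤
      theta (4 ^ (j + 1)) := by
    have log_succ_le : log (4 ^ (j + 1) + 1) ≤ 2 * (j + 2) * log 2 := by
      have one_le : (1 : ℝ) ≤ 4 ^ (j + 1) := one_le_pow₀ (by norm_num)
      calc log (4 ^ (j + 1) + 1) ≤ log (4 ^ (j + 2)) := by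
            gcongr
            rw [pow_succ _ (j + 1)]
            linarith
        _ = 2 * (j + 2) * log 2 := by rw [log_four_pow]; push_cast; ring
    have := Chebyshev.theta_ge (4 ^ (j + 1))
    push_cast [sqrt_four_pow, log_four_pow] at this
    linarith
  have pow_bound : (2 * (j + 2) + 8 * (j + 1) * 2 ^ j : ℝ) ≤ 4 ^ j := by
    exact_mod_cast add_mul_two_pow_le_four_pow hj
  have := mul_le_mul_of_nonneg_right pow_bound log_two_pos.le
  rw [pow_succ] at lower ⊢
  linarith

theorem one_div_le_sum_one_div_prime {j : ℕ} (hj : 7 ≤ j) :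
    (1 / (8 * (j + 1)) : ℝ) ≤ ∑ p ∈ Ioc (4 ^ j) (4 ^ (j + 1)) with Nat.Prime p, (1 / p : ℝ) := by
  refine le_trans ?_ (theta_sub_theta_div_le_sum_one_div (Nat.pow_le_pow_right four_pos j.le_succ)
    (le_self_pow₀ (by norm_num) (by omega) |>.trans' (by norm_num)))
  have : 0 < log 2 := Real.log_pos one_lt_two
  have log_four_pow : log (4 ^ (j + 1)) = (j + 1) * (2 * log 2) := by
    rw [show (4 : ℝ) = 2 ^ 2 by norm_num, Real.log_pow, Real.log_pow]
    push_cast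
    ring
  push_cast
  rw [log_four_pow, div_le_div_iff₀ (by positivity) (by positivity), pow_succ]
  have := four_pow_mul_log_two_le_theta_sub_theta hj
  rw [pow_succ] at this
  have := mul_le_mul_of_nonneg_right this (show (0 : ℝ) ≤ 8 * (j + 1) by positivity)
  linarith

theorem harmonic_sub_harmonic_le_sum_one_div_prime {a b : ℕ} (ha : 7 ≤ a) (hab : a ≤ b) :
    (harmonic b - harmonic a : ℝ) / 8 ≤
      ∑ p ∈ Ioc (4 ^ a) (4 ^ b) with Nat.Prime p, (1 / p : ℝ) := by
  induction b, hab using Nat.le_induction with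
  | base => simp
  | succ j haj ih =>
    have block := one_div_le_sum_one_div_prime (ha.trans haj)
    rw [sum_filter] at ih block ⊢
    rw [← sum_Ioc_consecutive _ (Nat.pow_le_pow_right four_pos haj)
      (Nat.pow_le_pow_right four_pos j.le_succ), harmonic_succ]
    calc ((harmonic j + ((j + 1 : ℕ) : ℚ)⁻¹ : ℚ) - harmonic a : ℝ) / 8
        = (harmonic j - harmonic a : ℝ) / 8 + 1 / (8 * (j + 1)) := by
          push_cast
          field_simp
          ring
      _ ≤ _ := add_le_add ih block

variable {ι : Type*} {l : Filter ι} {a b : ι → ℕ}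

theorem tendsto_sum_one_div_prime_atTop (ha : Tendsto a l atTop) (hab : ∀ i, a i ^ 2 ≤ b i) :
    Tendsto (fun i => ∑ p ∈ Ioc (4 ^ a i) (4 ^ b i) with Nat.Prime p, (1 / p : ℝ)) l atTop := by
  have log_tendsto : Tendsto (fun i => (log (a i) - 1) / 8) l atTop :=
    (tendsto_atTop_add_const_right _ (-1)
      (Real.tendsto_log_atTop.comp (tendsto_natCast_atTop_atTop.comp ha))).atTop_div_const
        (by norm_num)
  refine tendsto_atTop_mono' l ?_ log_tendsto
  filter_upwards [ha.eventually_ge_atTop 7] with i hi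
  refine le_trans ?_ (harmonic_sub_harmonic_le_sum_one_div_prime hi
    ((Nat.le_self_pow two_ne_zero _).trans (hab i)))
  have log_sq_le : 2 * log (a i) ≤ log ((b i + 1 : ℕ) : ℝ) := by
    have : (0 : ℝ) < a i := by exact_mod_cast (by omega : 0 < a i)
    calc 2 * log (a i) = log ((a i : ℝ) ^ 2) := by simp
      _ ≤ log ((b i + 1 : ℕ) : ℝ) := by
        gcongr
        exact_mod_cast (hab i).trans (b i).le_succ
  have lower := log_add_one_le_harmonic (b i)
  have upper := harmonic_le_one_add_log (a i)
  linarith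

theorem sum_Ioc_prime_one_div_sq_le {m n : ℕ} (hm : m ≠ 0) :
    ∑ p ∈ Ioc m n with Nat.Prime p, (1 / p ^ 2 : ℝ) ≤ 1 / m := by
  obtain hnm | hmn := lt_or_ge n m
  · rw [Ioc_eq_empty (by omega), filter_empty, sum_empty]
    positivity
  calc ∑ p ∈ Ioc m n with Nat.Prime p, (1 / p ^ 2 : ℝ) ≤ ∑ p ∈ Ioc m n, ((p : ℝ) ^ 2)⁻¹ := by
        simp only [one_div]
        exact sum_le_sum_of_subset_of_nonneg (filter_subset _ _) fun _ _ _ => by positivity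
    _ ≤ (m : ℝ)⁻¹ - (n : ℝ)⁻¹ := sum_Ioc_inv_sq_le_sub hm hmn
    _ ≤ 1 / m := by
        rw [one_div]
        exact sub_le_self _ (by positivity)

theorem harmonic_le_of_le_four_pow {n r : ℕ} (hn : n ≤ 4 ^ r) : (harmonic n : ℝ) ≤ 1 + 2 * r := by
  obtain rfl | n_pos := n.eq_zero_or_pos
  · rw [harmonic_zero, Rat.cast_zero]
    positivity
  have log_four_le : log 4 ≤ 2 := by
    rw [show (4 : ℝ) = 2 ^ 2 by norm_num, Real.log_pow]
    push_cast
    linarith [Real.log_two_lt_d9]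
  calc (harmonic n : ℝ) ≤ 1 + log n := harmonic_le_one_add_log n
    _ ≤ 1 + log (4 ^ r) := by
        gcongr
        exact_mod_cast hn
    _ ≤ 1 + 2 * r := by
        rw [Real.log_pow]
        nlinarith

end PrimeReciprocals

section Asymptotics

open Equiv Equiv.Perm MulAction

theorem tendsto_sqrt_log_half : Tendsto (fun k => (Nat.log 4 (k / 2)).sqrt) atTop atTop := by
  refine tendsto_atTop.2 fun m => ?_
  filter_upwards [eventually_ge_atTop (2 * 4 ^ (m * m))] with k hk
  exact Nat.le_sqrt.2 (Nat.le_log_of_pow_le (by norm_num) (by omega))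

theorem harmonic_le_sqrt_log_half_add_one_sq (k : ℕ) :
    (harmonic k : ℝ) ≤ 5 * ((Nat.log 4 (k / 2)).sqrt + 1 : ℝ) ^ 2 := by
  set b := Nat.log 4 (k / 2)
  have k_le : k ≤ 4 ^ (b + 2) := by
    have : k / 2 < 4 ^ (b + 1) := Nat.lt_pow_succ_log_self (by norm_num) _
    rw [pow_succ]
    omega
  have b_lt : (b + 1 : ℝ) ≤ (b.sqrt + 1) ^ 2 := by
    rw [sq]
    exact_mod_cast Nat.lt_succ_sqrt b
  have : (1 : ℝ) ≤ (b.sqrt + 1) ^ 2 :=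
    one_le_pow₀ (le_add_of_nonneg_left (Nat.cast_nonneg _))
  calc (harmonic k : ℝ) ≤ 1 + 2 * (b + 2 : ℕ) := harmonic_le_of_le_four_pow k_le
    _ ≤ 5 * (b.sqrt + 1 : ℝ) ^ 2 := by
        push_cast
        linarith

theorem tendsto_add_one_sq_mul_one_div_four_pow :
    Tendsto (fun a : ℕ => (a + 1 : ℝ) ^ 2 * (1 / 4 ^ a)) atTop (nhds 0) := by
  have shifted := ((tendsto_pow_const_div_const_pow_of_one_lt 2
    (show (1 : ℝ) < 4 by norm_num)).comp (tendsto_add_atTop_nat 1)).const_mul 4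
  rw [mul_zero] at shifted
  refine shifted.congr fun a => ?_
  simp only [Function.comp_apply, pow_succ (4 : ℝ)]
  push_cast
  field_simp

theorem tendsto_proportion_not_isolatesPrimeCycle :
    Tendsto (fun k => proportion {q : Perm (Fin k) × Perm (Fin k) | ¬ IsolatesPrimeCycle q.1 q.2})
      atTop (nhds 0) := by
  -- Over the primes in `(4 ^ a, 4 ^ b]` with `b ≈ a ^ 2`, the sum of `1 / p` is at least of order
  -- `log a`, while that of `1 / p ^ 2` is at most `4 ^ (-a)`, which beats `harmonic k = O(a ^ 2)`.
  set b : ℕ → ℕ := fun k => Nat.log 4 (k / 2)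
  set a : ℕ → ℕ := fun k => (b k).sqrt
  set P : ℕ → Finset ℕ := fun k => {p ∈ Ioc (4 ^ a k) (4 ^ b k) | Nat.Prime p}
  have ha : Tendsto a atTop atTop := tendsto_sqrt_log_half
  have hP : Tendsto (fun k => ∑ p ∈ P k, (1 / p : ℝ)) atTop atTop :=
    tendsto_sum_one_div_prime_atTop ha fun k => Nat.sqrt_le' _
  have bound_tendsto := (tendsto_inv_atTop_zero.comp hP).add
    ((tendsto_add_one_sq_mul_one_div_four_pow.comp ha).const_mul 10)
  rw [mul_zero, add_zero] at bound_tendsto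
  refine squeeze_zero' (.of_forall fun k => proportion_nonneg _) ?_ bound_tendsto
  filter_upwards [hP.eventually_gt_atTop 0, eventually_ge_atTop 2] with k sum_pos hk
  have P_nonempty : (P k).Nonempty := nonempty_of_sum_ne_zero sum_pos.ne'
  have prime_le : ∀ p ∈ P k, p.Prime ∧ 2 * p ≤ Fintype.card (Fin k) := fun p hp => by
    obtain ⟨hp_mem, p_prime⟩ := mem_filter.1 hp
    have p_le := (mem_Ioc.1 hp_mem).2.trans (Nat.pow_log_le_self 4 (by omega))
    rw [Fintype.card_fin]
    exact ⟨p_prime, by omega⟩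
  have squares_le : ∑ p ∈ P k, (1 / p ^ 2 : ℝ) ≤ 1 / 4 ^ a k := by
    exact_mod_cast sum_Ioc_prime_one_div_sq_le (pow_ne_zero (a k) four_ne_zero)
  refine (proportion_not_isolatesPrimeCycle_le P_nonempty prime_le).trans ?_
  rw [Fintype.card_fin]
  calc _ ≤ (∑ p ∈ P k, (1 / p : ℝ))⁻¹ + 2 * (5 * (a k + 1 : ℝ) ^ 2) * (1 / 4 ^ a k) := by
        gcongr
        exact harmonic_le_sqrt_log_half_add_one_sq k
    _ = _ := by
        simp only [Function.comp_apply]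
        ring

theorem tendsto_proportion_not_isPreprimitive :
    Tendsto (fun k => proportion {q : Perm (Fin k) × Perm (Fin k) |
      ¬ IsPreprimitive (Subgroup.closure {q.1, q.2}) (Fin k)}) atTop (nhds 0) := by
  have bound_tendsto := tendsto_sum_Ioo_one_div_choose.add
    (tendsto_sum_Ioo_one_div_choose.comp (tendsto_sub_atTop_nat 1))
  rw [add_zero] at bound_tendsto
  refine squeeze_zero (fun _ => proportion_nonneg _) (fun k => ?_) bound_tendsto
  simpa only [Fintype.card_fin, Function.comp_apply] using
    proportion_not_isPreprimitive_le (α := Fin k)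

theorem proportion_sign_eq_neg_one {α : Type*} [Fintype α] [DecidableEq α] [Nontrivial α] :
    proportion {σ : Perm α | sign σ = -1} = 1 / 2 := by
  have odd_eq_compl : {σ : Perm α | sign σ = -1} = (alternatingGroup α : Set (Perm α))ᶜ := by
    ext σ
    rw [Set.mem_compl_iff, SetLike.mem_coe, mem_alternatingGroup]
    exact Int.units_ne_iff_eq_neg.symm
  have card_even := two_mul_nat_card_alternatingGroup (α := α)
  have card_add_compl := Set.ncard_add_ncard_compl (alternatingGroup α : Set (Perm α))
  rw [← SetLike.coe_sort_coe, Nat.card_coe_set_eq] at card_even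
  have two_mul_odd : 2 * {σ : Perm α | sign σ = -1}.ncard = Nat.card (Perm α) := by
    rw [odd_eq_compl]
    omega
  rw [proportion, div_eq_div_iff (by exact_mod_cast Nat.card_pos.ne') two_ne_zero, mul_comm,
    one_mul]
  exact_mod_cast two_mul_odd

theorem proportion_sign_eq_neg_one_and {k : ℕ} (hk : 2 ≤ k) :
    proportion {q : Perm (Fin k) × Perm (Fin k) | sign q.1 = -1 ∧ sign q.2 = -1} = 1 / 4 := by
  have : Nontrivial (Fin k) := Fin.nontrivial_iff_two_le.2 hk
  calc _ = proportion ({σ : Perm (Fin k) | sign σ = -1} ×ˢ {τ : Perm (Fin k) | sign τ = -1}) := rfl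
    _ = 1 / 4 := by
        rw [proportion_prod, proportion_sign_eq_neg_one]
        norm_num

theorem natCard_subtype_div_factorial_sq {k : ℕ} (R : Perm (Fin k) × Perm (Fin k) → Prop) :
    (Nat.card {q // R q} : ℝ) / (k.factorial : ℝ) ^ 2 = proportion {q | R q} := by
  rw [proportion, ← Nat.card_coe_set_eq, Nat.card_prod, Nat.card_perm, Nat.card_fin, Nat.cast_mul,
    ← sq]
  rfl

theorem proportion_circGenPair_eq_le {k : ℕ} (hk : 2 ≤ k) :
    proportion {q : Perm (Fin k) × Perm (Fin k) | circGenPair q.1 q.2 = equalSignSubgroup k} ≤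
      1 / 4 := by
  rw [← proportion_sign_eq_neg_one_and hk]
  exact proportion_mono fun _ => sign_eq_neg_one_of_circGenPair_eq hk

theorem le_proportion_circGenPair_eq {k : ℕ} (hk : 5 ≤ k) :
    1 / 4 - (proportion {q : Perm (Fin k) × Perm (Fin k) | ¬ IsolatesPrimeCycle q.1 q.2} +
      proportion {q : Perm (Fin k) × Perm (Fin k) |
        ¬ IsPreprimitive (Subgroup.closure {q.1, q.2}) (Fin k)}) ≤
      proportion {q : Perm (Fin k) × Perm (Fin k) |
        circGenPair q.1 q.2 = equalSignSubgroup k} := by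
  rw [← proportion_sign_eq_neg_one_and (show 2 ≤ k by omega), sub_le_iff_le_add]
  refine le_trans (proportion_mono fun q hq => ?_) ((proportion_union_le _ _).trans
    (add_le_add_right (proportion_union_le _ _) _))
  by_cases hiso : IsolatesPrimeCycle q.1 q.2
  · by_cases hprim : IsPreprimitive (Subgroup.closure {q.1, q.2}) (Fin k)
    · exact .inl (circGenPair_eq_equalSignSubgroup hk hq.1 hq.2 hprim hiso)
    · exact .inr (.inr hprim)
  · exact .inr (.inl hiso)

end Asymptotics

/-- The group circularly generated by a pair of uniformly random permutations of `k`
points equals the equal-sign subgroup `(A_k × A_k) ⋊ ⟨(π, π)⟩` with probability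
tending to `1/4`. -/
theorem circGenPair_equalSign_probability :
    Filter.Tendsto
      (fun k : ℕ =>
        (Nat.card {p : Equiv.Perm (Fin k) × Equiv.Perm (Fin k) //
            circGenPair p.1 p.2 = equalSignSubgroup k} : ℝ) / (Nat.factorial k : ℝ) ^ 2)
      Filter.atTop (nhds (1 / 4)) := by
  have lower_tendsto := (tendsto_proportion_not_isolatesPrimeCycle.add
    tendsto_proportion_not_isPreprimitive).const_sub (1 / 4)
  rw [add_zero, sub_zero] at lower_tendsto
  simp only [natCard_subtype_div_factorial_sq]
  refine tendsto_of_tendsto_of_tendsto_of_le_of_le' lower_tendsto tendsto_const_nhds ?_ ?_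
  · filter_upwards [eventually_ge_atTop 5] with k hk using le_proportion_circGenPair_eq hk
  · filter_upwards [eventually_ge_atTop 2] with k hk using proportion_circGenPair_eq_le hk
end

section
/- The sequence k ↦ (Nat.card {p : Equiv.Perm (Fin k) × Equiv.Perm (Fin k) // G_c(p.1, p.2) = (alternatingGroup (Fin k)).prod (alternatingGroup (Fin k))} : ℝ) / (k !)^2 tends to 1/4 as k → ∞; that is, the group circularly generated by a pair of uniformly random permutations of k points equals A_k × A_k with probability tending to 1/4. -/
/-!
A pair generating `A_k × A_k` consists of even permutations, so the limit is at most `1/4`.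

Conversely, suppose `σ` and `τ` are even, generate a primitive group, and for some prime `p ≤ k/2`
the permutation `σ` has a cycle of length `p` while `p` divides no other cycle length of `σ` or `τ`.
A common power then kills `τ` and turns `σ` into a `p`-cycle. A conjugate of this cycle can be
chosen whose support meets its own in a single point, so that their commutator is a 3-cycle, and
Jordan's theorem gives `⟨σ, τ⟩ = A_k`. The same power shows that the circularly generated group
contains `(c, 1)` with `c ≠ 1`, hence the whole product by simplicity of `A_k`.

It remains to see that these conditions fail with small probability:
* if `⟨σ, τ⟩` is imprimitive, both permutations fix a proper nonempty subset or a partition into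
  blocks of equal size. A pair of random elements of a group acting transitively on `X` has a common
  fixed point with probability at most `1 / |X|`, and the sum over all sizes is `O(log k / k)`;
* the number of cycles of `σ` with length in a set `P` of primes has mean `∑ 1 / p` and variance at
  most its mean, so by Chebyshev's inequality it vanishes with probability at most `1 / ∑ 1 / p`;
* some `p ∈ P` divides a second cycle length with probability `O(log k * ∑ 1 / p ^ 2)`.

Taking for `P` the primes between about `2 (log k) ^ (3 / 2)` and `k / 2`, an Euler product estimate
gives `∑ 1 / p → ∞`, and `log k * ∑ 1 / p ^ 2 → 0`.
-/

section GroupTheory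

open Equiv Equiv.Perm MulAction Subgroup
open scoped commutatorElement

variable {α : Type*} [Fintype α] [DecidableEq α]

theorem isThreeCycle_commutator_of_support_inter_eq_singleton {a b : Perm α} {x : α}
    (h : a.support ∩ b.support = {x}) : IsThreeCycle ⁅a, b⁆ := by
  have mem_iff (y : α) : a y ≠ y ∧ b y ≠ y ↔ y = x := by
    rw [← mem_support, ← mem_support, ← Finset.mem_inter, h, Finset.mem_singleton]
  obtain ⟨hax, hbx⟩ := (mem_iff x).2 rfl
  have a_fix {y : α} (hy : b y ≠ y) (hyx : y ≠ x) : a y = y := by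
    by_contra hay; exact hyx ((mem_iff y).1 ⟨hay, hy⟩)
  have habx : a (b x) = b x := a_fix (fun e => hbx (b.injective e)) hbx
  -- `b` agrees on the support of `a` with this transposition, so both conjugate `a` alike.
  set s := swap x (b x) with hs
  have disjoint_sb : Disjoint (s * b) a := by
    intro y
    by_cases hay : a y = y
    · exact .inr hay
    left
    rcases eq_or_ne y x with rfl | hyx
    · rw [mul_apply, hs, swap_apply_right]
    · have hby : b y = y := by by_contra hby; exact hay (a_fix hby hyx)
      rw [mul_apply, hby, hs, swap_apply_of_ne_of_ne hyx]
      rintro rfl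
      exact hay habx
  have conj_eq : b * a⁻¹ * b⁻¹ = s * a⁻¹ * s := by
    have hcomm : s * b * a⁻¹ = a⁻¹ * (s * b) := disjoint_sb.commute.inv_right.eq
    calc b * a⁻¹ * b⁻¹ = s * (s * b * a⁻¹) * b⁻¹ := by simp [hs, ← mul_assoc]
      _ = s * a⁻¹ * s := by rw [hcomm]; group
  have : ⁅a, b⁆ = swap (b x) (a x) * swap (b x) x := by
    calc ⁅a, b⁆ = a * (b * a⁻¹ * b⁻¹) := by rw [commutatorElement_def]; group
      _ = a * s * a⁻¹ * s := by rw [conj_eq]; group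
      _ = swap (b x) (a x) * swap (b x) x := by
        rw [hs, ← Equiv.swap_apply_apply, habx, swap_comm (a x), swap_comm x]
  rw [this]
  have hab : b x ≠ a x := fun e => hax (a.injective (by rw [← e, habx]))
  exact isThreeCycle_swap_mul_swap_same hab hbx hax

theorem isMultiplyPretransitive_of_isCycle_mem_s14 {G : Subgroup (Perm α)}
    (hG : IsPreprimitive G α) {g : Perm α} (hgc : g.IsCycle) (hp : g.support.card.Prime)
    (hcard : g.support.card + 2 ≤ Fintype.card α) (hg : g ∈ G) :
    IsMultiplyPretransitive G α (Fintype.card α - g.support.card + 1) := by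
  obtain ⟨n, hn⟩ : ∃ n, Fintype.card α - g.support.card = n + 1 :=
    ⟨Fintype.card α - g.support.card - 1, by omega⟩
  rw [hn]
  refine (hG.isMultiplyPreprimitive (s := (g.supportᶜ : Finset α)) (n := n)
    ?_ ?_ ?_).isMultiplyPretransitive
  · rw [Set.ncard_coe_finset, Finset.card_compl, hn]
  · have := hp.two_le
    rw [Nat.card_eq_fintype_card]
    omega
  · rw [Finset.coe_compl]
    have := isPretransitive_of_isCycle_mem hgc hg
    refine IsPreprimitive.of_prime_card ?_
    convert! hp
    have hset : (SubMulAction.ofFixingSubgroup G (g.support : Set α)ᶜ : Set α) = g.support := by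
      ext x
      simp [SubMulAction.mem_ofFixingSubgroup_iff]
    exact (Nat.card_coe_set_eq _).trans (by rw [hset, Set.ncard_coe_finset])

theorem alternatingGroup_le_of_isPreprimitive_of_isCycle_mem_s14 {G : Subgroup (Perm α)}
    (hG : IsPreprimitive G α) {g : Perm α} (hgc : g.IsCycle) (hp : g.support.card.Prime)
    (hcard : 2 * g.support.card ≤ Fintype.card α) (hg : g ∈ G) : alternatingGroup α ≤ G := by
  have two_le := hp.two_le
  have hmul : IsMultiplyPretransitive G α g.support.card :=
    have := isMultiplyPretransitive_of_isCycle_mem_s14 hG hgc hp (by omega) hg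
    isMultiplyPretransitive_of_le' (n := Fintype.card α - g.support.card + 1) (by omega)
      (by rw [ENat.card_eq_coe_fintype_card]; norm_cast; omega)
  have htrans := Set.powersetCard.isPretransitive_of_isMultiplyPretransitive G hmul
  obtain ⟨x, hx⟩ : g.support.Nonempty := hgc.nonempty_support
  obtain ⟨u, hu, hucard⟩ : ∃ u ⊆ g.supportᶜ, u.card = g.support.card - 1 :=
    Finset.exists_subset_card_eq (by rw [Finset.card_compl]; omega)
  have hxu : x ∉ u := fun h => Finset.mem_compl.1 (hu h) hx
  have hcard_insert : (insert x u).card = g.support.card := by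
    rw [Finset.card_insert_of_notMem hxu]; omega
  obtain ⟨γ, hγ⟩ := htrans.exists_smul_eq ⟨g.support, rfl⟩ ⟨insert x u, hcard_insert⟩
  set g' : Perm α := γ * g * (γ : Perm α)⁻¹
  have hg' : g' ∈ G := G.mul_mem (G.mul_mem γ.2 hg) (G.inv_mem γ.2)
  have hinter : g.support ∩ g'.support = {x} := by
    have : g'.support = insert x u := by
      rw [support_conj, Finset.map_eq_image]
      exact congrArg Subtype.val hγ
    rw [this, Finset.inter_insert_of_mem hx,
      Finset.disjoint_iff_inter_eq_empty.1 (Finset.subset_compl_iff_disjoint_left.1 hu),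
      insert_empty_eq]
  exact alternatingGroup_le_of_isPreprimitive_of_isThreeCycle_mem hG
    (isThreeCycle_commutator_of_support_inter_eq_singleton hinter)
    (G.mul_mem (G.mul_mem (G.mul_mem hg hg') (G.inv_mem hg)) (G.inv_mem hg'))

theorem exists_pow_isCycle_and_pow_eq_one {σ τ : Perm α} {p : ℕ} (hp : p.Prime)
    (hσ : p ∈ σ.cycleType) (hσ' : ∀ n ∈ σ.cycleType.erase p, ¬ p ∣ n)
    (hτ : ∀ n ∈ τ.cycleType, ¬ p ∣ n) :
    ∃ m : ℕ, (σ ^ m).IsCycle ∧ (σ ^ m).support.card = p ∧ τ ^ m = 1 := by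
  have not_dvd_orderOf {ρ : Perm α} (h : ∀ n ∈ ρ.cycleType, ¬ p ∣ n) : ¬ p ∣ orderOf ρ := by
    rw [← lcm_cycleType]
    revert h
    induction ρ.cycleType using Multiset.induction with
    | empty => simp [hp.ne_one]
    | cons n s ih =>
      intro h
      rw [Multiset.lcm_cons, hp.prime.dvd_lcm, not_or]
      exact ⟨h n (s.mem_cons_self n), ih fun d hd => h d (Multiset.mem_cons_of_mem hd)⟩
  obtain ⟨c, ρ, rfl, hdisj, hc, rfl⟩ := mem_cycleType_iff.1 hσ
  rw [hdisj.cycleType_mul, hc.cycleType, Multiset.singleton_add, Multiset.erase_cons_head] at hσ'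
  set m := orderOf ρ * orderOf τ with hm
  have hcoprime : m.Coprime (orderOf c) := by
    rw [hc.orderOf, Nat.coprime_comm, hp.coprime_iff_not_dvd, hm, hp.dvd_mul, not_or]
    exact ⟨not_dvd_orderOf hσ', not_dvd_orderOf hτ⟩
  have hpow : (c * ρ) ^ m = c ^ m := by
    rw [hdisj.commute.mul_pow, hm, pow_mul ρ, pow_orderOf_eq_one, one_pow, mul_one]
  refine ⟨m, ?_, ?_, ?_⟩
  · rwa [hpow, hc.pow_iff]
  · rw [hpow, support_pow_coprime hcoprime]
  · rw [hm, mul_comm, pow_mul, pow_orderOf_eq_one, one_pow]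

theorem closure_pair_swap_eq_prod_of_isSimpleGroup {G : Type*} [Group G] {x y c : G}
    [IsSimpleGroup (closure {x, y})] (hc : c ≠ 1)
    (hmem : (c, 1) ∈ closure {(x, y), (y, x)}) :
    closure {(x, y), (y, x)} = (closure {x, y}).prod (closure {x, y}) := by
  set H : Subgroup (G × G) := closure {(x, y), (y, x)} with hH
  set A : Subgroup G := closure {x, y} with hA
  have hxyH : (x, y) ∈ H := subset_closure (.inl rfl)
  have hyxH : (y, x) ∈ H := subset_closure (.inr rfl)
  have hle : H ≤ A.prod A := by
    have hxA : x ∈ A := subset_closure (.inl rfl)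
    have hyA : y ∈ A := subset_closure (.inr rfl)
    rw [hH, closure_le]
    rintro _ (rfl | rfl)
    exacts [⟨hxA, hyA⟩, ⟨hyA, hxA⟩]
  have swap_mem : H ≤ H.comap (MulEquiv.prodComm : G × G ≃* G × G).toMonoidHom := by
    conv_lhs => rw [hH]
    rw [closure_le]
    rintro _ (rfl | rfl)
    exacts [hyxH, hxyH]
  have fst_surj : A ≤ H.map (MonoidHom.fst G G) := by
    rw [hA, closure_le]
    rintro _ (rfl | rfl)
    exacts [⟨_, hxyH, rfl⟩, ⟨_, hyxH, rfl⟩]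
  -- the kernel of the second projection of `H`, as a subgroup of `A`
  let N : Subgroup A := H.comap ((MonoidHom.inl G G).comp A.subtype)
  have hN : N.Normal := by
    refine ⟨fun n hn g => ?_⟩
    obtain ⟨⟨_, b⟩, hb, hbg⟩ := fst_surj g.2
    obtain rfl : _ = (g : G) := hbg
    simpa [N] using H.mul_mem (H.mul_mem hb hn) (H.inv_mem hb)
  have hN_top : N = ⊤ := by
    refine hN.eq_bot_or_eq_top.resolve_left fun hbot => hc ?_
    have : (⟨c, (hle hmem).1⟩ : A) ∈ N := hmem
    rw [hbot, mem_bot] at this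
    exact congrArg Subtype.val this
  have inl_mem {a : G} (ha : a ∈ A) : (a, 1) ∈ H := by
    have : (⟨a, ha⟩ : A) ∈ N := hN_top ▸ mem_top _
    exact this
  refine le_antisymm hle fun ⟨a, b⟩ ⟨ha, hb⟩ => ?_
  simpa using H.mul_mem (inl_mem ha) (swap_mem (inl_mem hb))

theorem circGenPair_eq_alternatingGroup_prod {k : ℕ} (hk : 5 ≤ k) {σ τ : Perm (Fin k)} {p : ℕ}
    (hσ : σ ∈ alternatingGroup (Fin k)) (hτ : τ ∈ alternatingGroup (Fin k))
    (hprim : IsPreprimitive (closure {σ, τ}) (Fin k)) (hp : p.Prime) (hpk : 2 * p ≤ k)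
    (hpσ : p ∈ σ.cycleType) (hpσ' : ∀ n ∈ σ.cycleType.erase p, ¬ p ∣ n)
    (hpτ : ∀ n ∈ τ.cycleType, ¬ p ∣ n) :
    circGenPair σ τ = (alternatingGroup (Fin k)).prod (alternatingGroup (Fin k)) := by
  obtain ⟨m, hcycle, rfl, hone⟩ := exists_pow_isCycle_and_pow_eq_one hp hpσ hpσ' hpτ
  have hclosure : closure {σ, τ} = alternatingGroup (Fin k) := by
    refine le_antisymm ?_ ?_
    · rw [closure_le]
      rintro _ (rfl | rfl) <;> assumption
    · exact alternatingGroup_le_of_isPreprimitive_of_isCycle_mem_s14 hprim hcycle hp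
        (by simpa using hpk) (pow_mem (subset_closure (.inl rfl)) m)
  have : IsSimpleGroup (closure {σ, τ}) :=
    hclosure ▸ alternatingGroup.isSimpleGroup (by simpa using hk)
  rw [circGenPair, ← hclosure]
  refine closure_pair_swap_eq_prod_of_isSimpleGroup hcycle.ne_one ?_
  rw [← hone, ← Prod.pow_mk]
  exact pow_mem (subset_closure (.inl rfl)) m

end GroupTheory

section UniformProbability

open scoped BigOperators

variable {X Y : Type*}

/-- The probability that a uniformly random element of the finite type `X` lies in `S`. -/
noncomputable def uniformProb (S : Set X) : ℝ := S.ncard / Nat.card X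

theorem uniformProb_nonneg (S : Set X) : 0 ≤ uniformProb S := by
  unfold uniformProb; positivity

theorem uniformProb_mono [Finite X] {S T : Set X} (h : S ⊆ T) :
    uniformProb S ≤ uniformProb T := by
  unfold uniformProb
  gcongr
  exact T.toFinite

theorem uniformProb_union_le (S T : Set X) :
    uniformProb (S ∪ T) ≤ uniformProb S + uniformProb T := by
  unfold uniformProb
  rw [← add_div]
  gcongr
  exact_mod_cast Set.ncard_union_le S T

theorem uniformProb_biUnion_le {ι : Type*} (s : Finset ι) (S : ι → Set X) :
    uniformProb (⋃ i ∈ s, S i) ≤ ∑ i ∈ s, uniformProb (S i) := by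
  classical
  induction s using Finset.induction with
  | empty => simp [uniformProb]
  | insert i s his ih =>
    rw [Finset.set_biUnion_insert, Finset.sum_insert his]
    exact (uniformProb_union_le _ _).trans (by gcongr)

theorem uniformProb_prod (S : Set X) (T : Set Y) :
    uniformProb (S ×ˢ T) = uniformProb S * uniformProb T := by
  unfold uniformProb
  rw [Set.ncard_prod, Nat.card_prod]
  push_cast
  rw [mul_div_mul_comm]

theorem uniformProb_univ [Finite X] [Nonempty X] : uniformProb (Set.univ : Set X) = 1 := by
  rw [uniformProb, Set.ncard_univ, div_self (Nat.cast_ne_zero.2 Nat.card_pos.ne')]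

theorem uniformProb_eq_expect [Fintype X] (S : Set X) :
    uniformProb S = 𝔼 x, S.indicator 1 x := by
  classical
  rw [uniformProb, Fintype.expect_eq_sum_div_card, Nat.card_eq_fintype_card,
    Set.ncard_eq_toFinset_card']
  simp only [Set.indicator_apply, Pi.one_apply, Finset.sum_boole, Set.filter_mem_univ_eq_toFinset]

theorem uniformProb_le_expect [Fintype X] {S : Set X} {f : X → ℝ} (hf : ∀ x, 0 ≤ f x)
    (hS : ∀ x ∈ S, 1 ≤ f x) : uniformProb S ≤ 𝔼 x, f x := by
  rw [uniformProb_eq_expect]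
  exact Finset.expect_le_expect fun x _ => Set.indicator_le' hS (fun x _ => hf x) x

end UniformProbability

section CycleType

open Equiv Equiv.Perm
open scoped BigOperators Nat

theorem cycleType_permCongr {α β : Type*} [Fintype α] [DecidableEq α] [Fintype β] [DecidableEq β]
    (e : α ≃ β) (ρ : Perm α) : (e.permCongr ρ).cycleType = ρ.cycleType := by
  have : e.permCongr ρ =
      ρ.extendDomain
        (e.trans (subtypeUnivEquiv (p := fun _ : β => True) fun _ => trivial).symm) := by
    ext x
    simp [extendDomain_apply_subtype]
  rw [this, cycleType_extendDomain]

variable {α : Type*} [Fintype α] [DecidableEq α]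

theorem card_filter_cycleFactorsFinset (σ : Perm α) (l : ℕ) :
    (σ.cycleFactorsFinset.filter fun c => c.support.card = l).card = σ.cycleType.count l := by
  rw [cycleType_def, Multiset.count_map, Finset.card_def, Finset.filter_val]
  simp only [Function.comp_apply, eq_comm]

theorem cycleType_eq_singleton_iff {c : Perm α} {l : ℕ} :
    c.cycleType = {l} ↔ c.IsCycle ∧ c.support.card = l := by
  constructor
  · intro h
    have hc : c.IsCycle := card_cycleType_eq_one.1 (by rw [h, Multiset.card_singleton])
    exact ⟨hc, Multiset.singleton_inj.1 (hc.cycleType.symm.trans h)⟩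
  · rintro ⟨hc, rfl⟩
    exact hc.cycleType

theorem sum_filter_mem_cycleFactorsFinset {M : Type*} [AddCommMonoid M] {c : Perm α}
    (hc : c.IsCycle) (f : Multiset ℕ → M) :
    ∑ σ : Perm α with c ∈ σ.cycleFactorsFinset, f (σ.cycleType.erase c.support.card) =
      ∑ ρ : Perm (Fin (Fintype.card α - c.support.card)), f ρ.cycleType := by
  have hcard : Fintype.card {x // x ∉ c.support} = Fintype.card α - c.support.card := by
    rw [Fintype.card_subtype_compl, Fintype.card_coe]
  have disj (ρ : Perm {x // x ∉ c.support}) : Disjoint c (ofSubtype ρ) := by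
    rw [disjoint_iff_disjoint_support, Finset.disjoint_left]
    exact fun x hx hx' => mem_range_ofSubtype_iff.1 ⟨ρ, rfl⟩ hx' hx
  symm
  calc ∑ ρ : Perm (Fin (Fintype.card α - c.support.card)), f ρ.cycleType
      = ∑ ρ : Perm {x // x ∉ c.support}, f ρ.cycleType :=
        Fintype.sum_equiv (Fintype.equivFinOfCardEq hcard).symm.permCongr _ _
          fun ρ => by rw [cycleType_permCongr]
    _ = _ := by
      refine Finset.sum_nbij (fun ρ => c * ofSubtype ρ) ?_ ?_ ?_ ?_
      · intro ρ _
        simp [(disj ρ).cycleFactorsFinset_mul_eq_union, hc.cycleFactorsFinset_eq_singleton]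
      · exact fun ρ _ ρ' _ h => ofSubtype_injective (mul_left_cancel h)
      · intro σ hσ
        have hdisj := disjoint_mul_inv_of_mem_cycleFactorsFinset (Finset.mem_filter.1 hσ).2
        obtain ⟨ρ, hρ⟩ : σ * c⁻¹ ∈ (ofSubtype : Perm {x // x ∉ c.support} →* Perm α).range :=
          mem_range_ofSubtype_iff.2
            (Finset.disjoint_left.1 (disjoint_iff_disjoint_support.1 hdisj))
        refine ⟨ρ, Finset.mem_coe.2 (Finset.mem_univ ρ), ?_⟩
        change c * ofSubtype ρ = σ
        rw [hρ, ← hdisj.commute.eq, inv_mul_cancel_right]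
      · intro ρ _
        rw [(disj ρ).cycleType_mul, hc.cycleType, Multiset.singleton_add,
          Multiset.erase_cons_head, cycleType_ofSubtype]

theorem sum_count_cycleType_mul (l : ℕ) (f : Multiset ℕ → ℝ) :
    ∑ σ : Perm α, σ.cycleType.count l * f (σ.cycleType.erase l) =
      (Finset.univ.filter fun c : Perm α => c.cycleType = {l}).card *
        ∑ ρ : Perm (Fin (Fintype.card α - l)), f ρ.cycleType := by
  calc ∑ σ : Perm α, σ.cycleType.count l * f (σ.cycleType.erase l)
      = ∑ σ : Perm α, ∑ _c ∈ σ.cycleFactorsFinset.filter fun c => c.support.card = l,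
          f (σ.cycleType.erase l) := by
        simp only [Finset.sum_const, card_filter_cycleFactorsFinset, nsmul_eq_mul]
    _ = ∑ c : Perm α with c.cycleType = {l}, ∑ σ : Perm α with c ∈ σ.cycleFactorsFinset,
          f (σ.cycleType.erase l) := by
        refine Finset.sum_comm' fun σ c => ?_
        simp only [Finset.mem_univ, Finset.mem_filter, true_and, cycleType_eq_singleton_iff]
        exact ⟨fun h => ⟨h.1, (mem_cycleFactorsFinset_iff.1 h.1).1, h.2⟩, fun h => ⟨h.1, h.2.2⟩⟩
    _ = ∑ c : Perm α with c.cycleType = {l},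
          ∑ ρ : Perm (Fin (Fintype.card α - l)), f ρ.cycleType := by
        refine Finset.sum_congr rfl fun c hcl => ?_
        obtain ⟨hc, rfl⟩ := cycleType_eq_singleton_iff.1 (Finset.mem_filter.1 hcl).2
        exact sum_filter_mem_cycleFactorsFinset hc f
    _ = _ := by rw [Finset.sum_const, nsmul_eq_mul]

theorem expect_count_cycleType_mul {l : ℕ} (hl : 2 ≤ l) (hlα : l ≤ Fintype.card α)
    (f : Multiset ℕ → ℝ) :
    𝔼 σ : Perm α, σ.cycleType.count l * f (σ.cycleType.erase l) =
      (𝔼 ρ : Perm (Fin (Fintype.card α - l)), f ρ.cycleType) / l := by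
  have hcount : l * (Finset.univ.filter fun c : Perm α => c.cycleType = {l}).card *
      (Fintype.card α - l)! = (Fintype.card α)! := by
    rw [card_of_cycleType_singleton hl hlα, ← mul_assoc, Nat.mul_factorial_pred (by omega),
      mul_comm l !, Nat.choose_mul_factorial_mul_factorial hlα]
  rw [Fintype.expect_eq_sum_div_card, Fintype.expect_eq_sum_div_card, sum_count_cycleType_mul,
    Fintype.card_perm, Fintype.card_perm, Fintype.card_fin, ← hcount]
  have hne : (Finset.univ.filter fun c : Perm α => c.cycleType = {l}).card ≠ 0 := fun h =>
    (Fintype.card α).factorial_ne_zero (by rw [← hcount, h, mul_zero, zero_mul])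
  push_cast
  rw [mul_right_comm, mul_comm, mul_div_mul_right _ _ (by exact_mod_cast hne), div_div,
    mul_comm (l : ℝ)]

theorem expect_count_cycleType {l : ℕ} (hl : 2 ≤ l) (hlα : l ≤ Fintype.card α) :
    𝔼 σ : Perm α, (σ.cycleType.count l : ℝ) = (l : ℝ)⁻¹ := by
  simpa using expect_count_cycleType_mul hl hlα fun _ => 1

theorem expect_count_cycleType_le {l : ℕ} (hl : 2 ≤ l) :
    𝔼 σ : Perm α, (σ.cycleType.count l : ℝ) ≤ (l : ℝ)⁻¹ := by
  by_cases hlα : l ≤ Fintype.card α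
  · exact (expect_count_cycleType hl hlα).le
  · have hzero (σ : Perm α) : σ.cycleType.count l = 0 := Multiset.count_eq_zero.2 fun h =>
      hlα ((le_card_support_of_mem_cycleType h).trans (Finset.card_le_univ _))
    simp [hzero]

theorem one_le_count_cast {m : Multiset ℕ} {l : ℕ} (h : l ∈ m) : (1 : ℝ) ≤ m.count l := by
  exact_mod_cast Multiset.one_le_count_iff_mem.2 h

theorem uniformProb_mem_cycleType_le {l : ℕ} (hl : 2 ≤ l) :
    uniformProb {σ : Perm α | l ∈ σ.cycleType} ≤ (l : ℝ)⁻¹ :=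
  (uniformProb_le_expect (fun _ => by positivity) fun _ h => one_le_count_cast h).trans
    (expect_count_cycleType_le hl)

theorem uniformProb_exists_dvd_cycleType_le {d : ℕ} (hd : 2 ≤ d) :
    uniformProb {σ : Perm α | ∃ l ∈ σ.cycleType, d ∣ l} ≤
      harmonic (Fintype.card α) * (d : ℝ)⁻¹ := by
  have hcover : {σ : Perm α | ∃ l ∈ σ.cycleType, d ∣ l} ⊆
      ⋃ j ∈ Finset.range (Fintype.card α), {σ : Perm α | d * (j + 1) ∈ σ.cycleType} := by
    rintro σ ⟨_, hl, j, rfl⟩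
    have hle : d * j ≤ Fintype.card α :=
      (le_card_support_of_mem_cycleType hl).trans (Finset.card_le_univ _)
    obtain ⟨i, rfl⟩ : ∃ i, j = i + 1 :=
      Nat.exists_eq_succ_of_ne_zero (by rintro rfl; simpa using two_le_of_mem_cycleType hl)
    simp only [Set.mem_iUnion, Finset.mem_range]
    exact ⟨i, by nlinarith, hl⟩
  calc uniformProb {σ : Perm α | ∃ l ∈ σ.cycleType, d ∣ l}
      ≤ ∑ j ∈ Finset.range (Fintype.card α),
          uniformProb {σ : Perm α | d * (j + 1) ∈ σ.cycleType} :=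
        (uniformProb_mono hcover).trans (uniformProb_biUnion_le _ _)
    _ ≤ ∑ j ∈ Finset.range (Fintype.card α), ((d * (j + 1) : ℕ) : ℝ)⁻¹ :=
        Finset.sum_le_sum fun j _ => uniformProb_mem_cycleType_le (by nlinarith)
    _ = harmonic (Fintype.card α) * (d : ℝ)⁻¹ := by
        rw [harmonic, Rat.cast_sum, Finset.sum_mul]
        refine Finset.sum_congr rfl fun j _ => ?_
        push_cast
        rw [mul_inv, mul_comm]

theorem monotone_harmonic : Monotone harmonic :=
  monotone_nat_of_le_succ fun n => by
    rw [harmonic_succ]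
    exact le_add_of_nonneg_right (by positivity)

theorem uniformProb_mem_and_exists_dvd_erase_cycleType_le {d : ℕ} (hd : 2 ≤ d)
    (hdα : d ≤ Fintype.card α) :
    uniformProb {σ : Perm α | d ∈ σ.cycleType ∧ ∃ l ∈ σ.cycleType.erase d, d ∣ l} ≤
      harmonic (Fintype.card α) * ((d : ℝ) ^ 2)⁻¹ := by
  set T : Set (Multiset ℕ) := {m | ∃ l ∈ m, d ∣ l}
  calc uniformProb {σ : Perm α | d ∈ σ.cycleType ∧ σ.cycleType.erase d ∈ T}
      ≤ 𝔼 σ : Perm α, (σ.cycleType.count d : ℝ) * T.indicator 1 (σ.cycleType.erase d) := by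
        refine uniformProb_le_expect (fun σ => ?_) fun σ hσ => ?_
        · exact mul_nonneg (by positivity) (Set.indicator_nonneg (fun _ _ => zero_le_one) _)
        · rw [Set.indicator_of_mem hσ.2, Pi.one_apply, mul_one]
          exact one_le_count_cast hσ.1
    _ = uniformProb {ρ : Perm (Fin (Fintype.card α - d)) | ρ.cycleType ∈ T} * (d : ℝ)⁻¹ := by
        rw [expect_count_cycleType_mul hd hdα, uniformProb_eq_expect, div_eq_mul_inv]
        rfl
    _ ≤ (harmonic (Fintype.card α - d) * (d : ℝ)⁻¹) * (d : ℝ)⁻¹ := by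
        gcongr
        have := uniformProb_exists_dvd_cycleType_le (α := Fin (Fintype.card α - d)) hd
        rwa [Fintype.card_fin] at this
    _ ≤ harmonic (Fintype.card α) * ((d : ℝ) ^ 2)⁻¹ := by
        rw [mul_assoc, ← mul_inv, ← sq]
        gcongr
        exact monotone_harmonic (Nat.sub_le _ _)

theorem uniformProb_exists_mem_cycleType_and_dvd_le {P : Finset ℕ}
    (hP : ∀ d ∈ P, 2 ≤ d ∧ d ≤ Fintype.card α) :
    uniformProb {p : Perm α × Perm α | ∃ d ∈ P, d ∈ p.1.cycleType ∧
        ((∃ l ∈ p.1.cycleType.erase d, d ∣ l) ∨ ∃ l ∈ p.2.cycleType, d ∣ l)} ≤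
      2 * harmonic (Fintype.card α) * ∑ d ∈ P, ((d : ℝ) ^ 2)⁻¹ := by
  set A : ℕ → Set (Perm α) := fun d =>
    {σ | d ∈ σ.cycleType ∧ ∃ l ∈ σ.cycleType.erase d, d ∣ l}
  set B : ℕ → Set (Perm α) := fun d => {σ | d ∈ σ.cycleType}
  set C : ℕ → Set (Perm α) := fun d => {σ | ∃ l ∈ σ.cycleType, d ∣ l}
  have hsub : {p : Perm α × Perm α | ∃ d ∈ P, d ∈ p.1.cycleType ∧
      ((∃ l ∈ p.1.cycleType.erase d, d ∣ l) ∨ ∃ l ∈ p.2.cycleType, d ∣ l)} ⊆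
        ⋃ d ∈ P, (A d ×ˢ Set.univ ∪ B d ×ˢ C d) := by
    rintro p ⟨d, hd, hmem, h | h⟩
    · exact Set.mem_biUnion hd (.inl ⟨⟨hmem, h⟩, trivial⟩)
    · exact Set.mem_biUnion hd (.inr ⟨hmem, h⟩)
  refine ((uniformProb_mono hsub).trans (uniformProb_biUnion_le P _)).trans ?_
  rw [Finset.mul_sum]
  refine Finset.sum_le_sum fun d hd => ?_
  calc uniformProb (A d ×ˢ Set.univ ∪ B d ×ˢ C d)
      ≤ uniformProb (A d) * 1 + uniformProb (B d) * uniformProb (C d) := by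
        rw [← uniformProb_univ (X := Perm α), ← uniformProb_prod, ← uniformProb_prod]
        exact uniformProb_union_le _ _
    _ ≤ harmonic (Fintype.card α) * ((d : ℝ) ^ 2)⁻¹ * 1 +
          (d : ℝ)⁻¹ * (harmonic (Fintype.card α) * (d : ℝ)⁻¹) := by
        gcongr
        · exact uniformProb_mem_and_exists_dvd_erase_cycleType_le (hP d hd).1 (hP d hd).2
        · exact uniformProb_nonneg _
        · exact uniformProb_mem_cycleType_le (hP d hd).1
        · exact uniformProb_exists_dvd_cycleType_le (hP d hd).1
    _ = 2 * harmonic (Fintype.card α) * ((d : ℝ) ^ 2)⁻¹ := by ring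

theorem expect_sq_sum_count_cycleType_le {P : Finset ℕ}
    (hP : ∀ l ∈ P, 2 ≤ l ∧ l ≤ Fintype.card α) :
    𝔼 σ : Perm α, (∑ l ∈ P, (σ.cycleType.count l : ℝ)) ^ 2 ≤
      (∑ l ∈ P, (l : ℝ)⁻¹) + (∑ l ∈ P, (l : ℝ)⁻¹) ^ 2 := by
  set X : Multiset ℕ → ℝ := fun m => ∑ l ∈ P, (m.count l : ℝ) with hX
  set μ : ℝ := ∑ l ∈ P, (l : ℝ)⁻¹
  have X_eq {l : ℕ} (hl : l ∈ P) {m : Multiset ℕ} (hlm : l ∈ m) : X m = 1 + X (m.erase l) := by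
    conv_lhs => rw [← Multiset.cons_erase hlm]
    simp [hX, Multiset.count_cons, Finset.sum_add_distrib, hl, add_comm]
  have count_mul_X {l : ℕ} (hl : l ∈ P) (m : Multiset ℕ) :
      m.count l * X m = m.count l * (1 + X (m.erase l)) := by
    by_cases hlm : l ∈ m
    · rw [X_eq hl hlm]
    · simp [Multiset.count_eq_zero_of_notMem hlm]
  have expect_X_le (n : ℕ) : 𝔼 ρ : Perm (Fin n), X ρ.cycleType ≤ μ := by
    rw [hX, Finset.expect_sum_comm]
    exact Finset.sum_le_sum fun l hl => expect_count_cycleType_le (hP l hl).1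
  calc 𝔼 σ : Perm α, X σ.cycleType ^ 2
      = ∑ l ∈ P, 𝔼 σ : Perm α, σ.cycleType.count l * (1 + X (σ.cycleType.erase l)) := by
        rw [← Finset.expect_sum_comm]
        refine Finset.expect_congr rfl fun σ _ => ?_
        rw [sq, ← Finset.sum_congr rfl fun l hl => count_mul_X hl σ.cycleType, ← Finset.sum_mul]
    _ = ∑ l ∈ P, (1 + 𝔼 ρ : Perm (Fin (Fintype.card α - l)), X ρ.cycleType) * (l : ℝ)⁻¹ := by
        refine Finset.sum_congr rfl fun l hl => ?_
        rw [expect_count_cycleType_mul (hP l hl).1 (hP l hl).2 fun m => 1 + X m,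
          Finset.expect_add_distrib, Fintype.expect_const, div_eq_mul_inv]
    _ ≤ ∑ l ∈ P, (1 + μ) * (l : ℝ)⁻¹ := by gcongr; exact expect_X_le _
    _ = μ + μ ^ 2 := by rw [← Finset.mul_sum]; ring

theorem uniformProb_forall_notMem_cycleType_le {P : Finset ℕ} (hne : P.Nonempty)
    (hP : ∀ l ∈ P, 2 ≤ l ∧ l ≤ Fintype.card α) :
    uniformProb {σ : Perm α | ∀ l ∈ P, l ∉ σ.cycleType} ≤ (∑ l ∈ P, (l : ℝ)⁻¹)⁻¹ := by
  set X : Perm α → ℝ := fun σ => ∑ l ∈ P, (σ.cycleType.count l : ℝ) with hX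
  set μ : ℝ := ∑ l ∈ P, (l : ℝ)⁻¹
  have hμ_pos : 0 < μ := Finset.sum_pos
    (fun l hl => inv_pos.2 (Nat.cast_pos.2 (by linarith [(hP l hl).1]))) hne
  have mean : 𝔼 σ, X σ = μ := by
    rw [hX, Finset.expect_sum_comm]
    exact Finset.sum_congr rfl fun l hl => expect_count_cycleType (hP l hl).1 (hP l hl).2
  have variance : 𝔼 σ, (X σ - μ) ^ 2 ≤ μ := by
    calc 𝔼 σ, (X σ - μ) ^ 2 = 𝔼 σ, X σ ^ 2 - 2 * μ * 𝔼 σ, X σ + μ ^ 2 := by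
          simp only [sub_sq, Finset.expect_add_distrib, Finset.expect_sub_distrib,
            Fintype.expect_const, Finset.mul_expect, mul_right_comm]
      _ ≤ μ := by rw [mean]; linarith [expect_sq_sum_count_cycleType_le hP]
  calc uniformProb {σ : Perm α | ∀ l ∈ P, l ∉ σ.cycleType}
      ≤ 𝔼 σ, (X σ - μ) ^ 2 / μ ^ 2 := by
        refine uniformProb_le_expect (fun σ => by positivity) fun σ hσ => ?_
        have : X σ = 0 := Finset.sum_eq_zero fun l hl => by
          rw [Multiset.count_eq_zero_of_notMem (hσ l hl), Nat.cast_zero]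
        rw [this, zero_sub, neg_sq, div_self (by positivity)]
    _ ≤ μ / μ ^ 2 := by
        rw [← Finset.expect_div]
        gcongr
    _ = μ⁻¹ := by field_simp

end CycleType

section Primitivity

open Equiv MulAction
open scoped Pointwise

theorem uniformProb_stabilizer {G X : Type*} [Group G] [Finite G] [MulAction G X]
    [IsPretransitive G X] (x : X) :
    uniformProb (stabilizer G x : Set G) = (Nat.card X : ℝ)⁻¹ := by
  have h : (Nat.card (stabilizer G x) : ℝ) * Nat.card X = Nat.card G := by
    rw [← index_stabilizer_of_transitive G x]
    exact_mod_cast (stabilizer G x).card_mul_index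
  change (Nat.card (stabilizer G x) : ℝ) / _ = _
  rw [← h, div_mul_cancel_left₀ (Nat.cast_ne_zero.2 Nat.card_pos.ne')]

theorem uniformProb_exists_common_fixedPoint_le (G X : Type*) [Group G] [Finite G] [MulAction G X]
    [IsPretransitive G X] [Finite X] :
    uniformProb {p : G × G | ∃ x : X, p.1 • x = x ∧ p.2 • x = x} ≤ (Nat.card X : ℝ)⁻¹ := by
  have := Fintype.ofFinite X
  have hset : {p : G × G | ∃ x : X, p.1 • x = x ∧ p.2 • x = x} =
      ⋃ x ∈ (Finset.univ : Finset X), (stabilizer G x : Set G) ×ˢ (stabilizer G x : Set G) := by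
    ext p
    simp
  calc _ ≤ ∑ x : X, uniformProb ((stabilizer G x : Set G) ×ˢ (stabilizer G x : Set G)) :=
        hset ▸ uniformProb_biUnion_le _ _
    _ = Nat.card X * ((Nat.card X : ℝ)⁻¹ * (Nat.card X : ℝ)⁻¹) := by
        simp only [uniformProb_prod, uniformProb_stabilizer, Finset.sum_const, Finset.card_univ,
          nsmul_eq_mul, Nat.card_eq_fintype_card]
    _ = (Nat.card X : ℝ)⁻¹ := by
        simpa only [inv_inv, mul_left_comm, mul_assoc] using mul_inv_mul_cancel (Nat.card X : ℝ)⁻¹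

variable {α : Type*}

theorem exists_perm_smul_eq_of_ncard_eq [Finite α] {s t : Set α} (h : s.ncard = t.ncard) :
    ∃ g : Perm α, g • s = t := by
  classical
  obtain ⟨e⟩ : Nonempty (s ≃ t) := Finite.card_eq.1 h
  refine ⟨e.extendSubtype, Set.eq_of_subset_of_ncard_le ?_ ?_⟩
  · rintro _ ⟨x, hx, rfl⟩
    exact e.extendSubtype_mem x hx
  · rw [Set.ncard_smul_set, h]

variable (α) in
/-- The partitions of `α` into blocks of size `d`, each encoded as its set of blocks, with the
action of the permutations of `α`. -/
def uniformPartitions (d : ℕ) : SubMulAction (Perm α) (Set (Set α)) where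
  carrier := {c | Setoid.IsPartition c ∧ ∀ s ∈ c, s.ncard = d}
  smul_mem' g c hc := by
    refine ⟨⟨?_, fun a => ?_⟩, ?_⟩
    · rw [Set.mem_smul_set_iff_inv_smul_mem, Set.smul_set_empty]
      exact hc.1.1
    · obtain ⟨s, ⟨hs, has⟩, huniq⟩ := hc.1.2 (g⁻¹ • a)
      refine ⟨g • s, ⟨Set.smul_mem_smul_set hs, Set.mem_smul_set_iff_inv_smul_mem.2 has⟩, ?_⟩
      rintro _ ⟨⟨t, ht, rfl⟩, hat⟩
      exact congrArg (g • ·) (huniq t ⟨ht, Set.mem_smul_set_iff_inv_smul_mem.1 hat⟩)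
    · rintro _ ⟨s, hs, rfl⟩
      exact (Set.ncard_smul_set g s).trans (hc.2 s hs)

namespace uniformPartitions

variable {d : ℕ}

theorem eq_of_mem (c : uniformPartitions α d) {s t : Set α} {a : α} (hs : s ∈ c.1) (has : a ∈ s)
    (ht : t ∈ c.1) (hat : a ∈ t) : s = t :=
  (c.2.1.2 a).unique ⟨hs, has⟩ ⟨ht, hat⟩

variable [Finite α]

theorem exists_equiv_prod_fin (c : uniformPartitions α d) :
    ∃ e : α ≃ c.1 × Fin d, ∀ a, a ∈ ((e a).1 : Set α) := by
  have huniq (a : α) : ∃! s : c.1, a ∈ (s : Set α) := by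
    obtain ⟨s, ⟨hs, has⟩, huniq⟩ := c.2.1.2 a
    exact ⟨⟨s, hs⟩, has, fun t hat => Subtype.ext (huniq t ⟨t.2, hat⟩)⟩
  have hfin (s : c.1) : Nonempty ((s : Set α) ≃ Fin d) := ⟨Finite.equivFinOfCardEq (c.2.2 s s.2)⟩
  let e := (Set.sigmaEquiv (fun s : c.1 => (s : Set α)) huniq).symm
  refine ⟨e.trans ((sigmaCongrRight fun s => (hfin s).some).trans (sigmaEquivProd _ _)),
    fun a => ?_⟩
  change a ∈ ((e a).1 : Set α)
  exact (huniq a).choose_spec.1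

theorem isPretransitive (hd : 0 < d) : IsPretransitive (Perm α) (uniformPartitions α d) := by
  refine ⟨fun c c' => ?_⟩
  obtain ⟨e, he⟩ := exists_equiv_prod_fin c
  obtain ⟨e', he'⟩ := exists_equiv_prod_fin c'
  obtain ⟨f⟩ : Nonempty (c.1 ≃ c'.1) := by
    rw [← Finite.card_eq]
    have h := Nat.card_congr (e.symm.trans e')
    rw [Nat.card_prod, Nat.card_prod, Nat.card_fin] at h
    exact Nat.eq_of_mul_eq_mul_right hd h
  have mem_iff {b : uniformPartitions α d} {u : α ≃ b.1 × Fin d} (hu : ∀ a, a ∈ ((u a).1 : Set α))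
      (s : b.1) (a : α) : a ∈ (s : Set α) ↔ (u a).1 = s :=
    ⟨fun h => Subtype.ext (eq_of_mem b (u a).1.2 (hu a) s.2 h), fun h => h ▸ hu a⟩
  let g : Perm α := e.trans ((prodCongr f (Equiv.refl _)).trans e'.symm)
  have hg (s : c.1) : g • (s : Set α) = f s := by
    ext a
    rw [Set.mem_smul_set_iff_inv_smul_mem, mem_iff he, mem_iff he', ← f.apply_eq_iff_eq]
    have : e' (g • g⁻¹ • a) = prodCongr f (Equiv.refl _) (e (g⁻¹ • a)) := e'.apply_symm_apply _
    rw [smul_inv_smul] at this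
    rw [this]
    rfl
  refine ⟨g, Subtype.ext (Set.Subset.antisymm ?_ fun t ht => ?_)⟩
  · rintro _ ⟨s, hs, rfl⟩
    exact (congrArg (· ∈ c'.1) (hg ⟨s, hs⟩)).mpr (f ⟨s, hs⟩).2
  · refine ⟨f.symm ⟨t, ht⟩, (f.symm ⟨t, ht⟩).2, ?_⟩
    change g • _ = t
    rw [hg, apply_symm_apply]

theorem exists_mem_of_ncard_eq [Nonempty (uniformPartitions α d)] {s : Set α} (hs : s.Nonempty)
    (hsd : s.ncard = d) : ∃ c : uniformPartitions α d, s ∈ c.1 := by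
  obtain ⟨c⟩ := ‹Nonempty (uniformPartitions α d)›
  obtain ⟨a, -⟩ := hs
  obtain ⟨t, ⟨ht, -⟩, -⟩ := c.2.1.2 a
  obtain ⟨g, rfl⟩ := exists_perm_smul_eq_of_ncard_eq ((c.2.2 t ht).trans hsd.symm)
  exact ⟨g • c, Set.smul_mem_smul_set ht⟩

theorem choose_le_card [Nonempty α] [Nonempty (uniformPartitions α (d + 1))] :
    (Nat.card α - 1).choose d ≤ Nat.card (uniformPartitions α (d + 1)) := by
  classical
  have := Fintype.ofFinite α
  obtain ⟨a⟩ := ‹Nonempty α›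
  let S := (Finset.univ.erase a).powersetCard d
  have ha {s : Finset α} (hs : s ∈ S) : a ∉ s := fun h =>
    Finset.notMem_erase a _ ((Finset.mem_powersetCard.1 hs).1 h)
  have hex (s : S) : ∃ c : uniformPartitions α (d + 1), ((insert a s.1 : Finset α) : Set α) ∈ c.1 :=
    exists_mem_of_ncard_eq ⟨a, by simp⟩ (by
      rw [Set.ncard_coe_finset, Finset.card_insert_of_notMem (ha s.2),
        (Finset.mem_powersetCard.1 s.2).2])
  choose F hF using hex
  have hinj : Function.Injective F := by
    intro s t hst
    have h : insert a s.1 = insert a t.1 := Finset.coe_injective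
      (eq_of_mem (F s) (hF s) (Finset.mem_insert_self a _) (hst ▸ hF t)
        (Finset.mem_insert_self a _))
    exact Subtype.ext (by rw [← Finset.erase_insert (ha s.2), h, Finset.erase_insert (ha t.2)])
  calc (Nat.card α - 1).choose d = Nat.card S := by
        rw [Nat.card_eq_fintype_card (α := S), Fintype.card_coe, Finset.card_powersetCard,
          Finset.card_erase_of_mem (Finset.mem_univ a), Finset.card_univ, Nat.card_eq_fintype_card]
    _ ≤ _ := Nat.card_le_card_of_injective F hinj

end uniformPartitions

theorem exists_powersetCard_smul_eq_of_not_isPretransitive [Finite α] [DecidableEq α]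
    {H : Subgroup (Perm α)} (h : ¬ IsPretransitive H α) : ∃ d, 0 < d ∧ d < Nat.card α ∧
      ∃ s : Set.powersetCard α d, ∀ g ∈ H, g • s = s := by
  obtain ⟨a, b, hb⟩ : ∃ a b : α, b ∉ orbit H a := by
    by_contra! hcon
    exact h ⟨hcon⟩
  have hfin : (orbit H a).Finite := Set.toFinite _
  refine ⟨_, (Set.ncard_pos hfin).2 ⟨a, mem_orbit_self a⟩, ?_,
    ⟨hfin.toFinset, (Set.ncard_eq_toFinset_card _ hfin).symm⟩, fun g hg => ?_⟩
  · rw [← Set.ncard_univ]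
    exact Set.ncard_lt_ncard (Set.ssubset_univ_iff.2 fun huniv => hb (huniv ▸ Set.mem_univ b))
  · refine Subtype.ext (Finset.coe_injective ?_)
    rw [Set.powersetCard.coe_smul, Finset.coe_smul_finset, hfin.coe_toFinset]
    exact smul_orbit (⟨g, hg⟩ : H) a

theorem exists_uniformPartitions_smul_eq_of_not_isPreprimitive [Finite α] {H : Subgroup (Perm α)}
    [IsPretransitive H α] (h : ¬ IsPreprimitive H α) : ∃ d, 1 < d ∧ d < Nat.card α ∧
      ∃ c : uniformPartitions α d, ∀ g ∈ H, g • c = c := by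
  obtain ⟨B, hB, hBt⟩ : ∃ B : Set α, IsBlock H B ∧ ¬ IsTrivialBlock B := by
    by_contra! hcon
    exact h { isTrivialBlock_of_isBlock := hcon _ }
  have hBnt : B.Nontrivial := by
    by_contra hc
    exact hBt (Or.inl (Set.not_nontrivial_iff.1 hc))
  refine ⟨B.ncard, Set.one_lt_ncard_iff_nontrivial.2 hBnt, ?_,
    ⟨Set.range fun g : H => g • B, (hB.isBlockSystem hBnt.nonempty).1, ?_⟩, fun g hg => ?_⟩
  · rw [← Set.ncard_univ]
    exact Set.ncard_lt_ncard (Set.ssubset_univ_iff.2 fun huniv => hBt (Or.inr huniv))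
  · rintro _ ⟨g, rfl⟩
    exact Set.ncard_smul_set g B
  · exact Subtype.ext (smul_orbit (⟨g, hg⟩ : H) B)

theorem add_one_mul_add_one_le_choose (a b : ℕ) :
    (a + 1) * (b + 1) ≤ (a + b + 2).choose (a + 1) := by
  rw [show a + b + 2 = (a + 1) + (b + 1) by ring, Nat.add_choose_eq]
  have h : (a, 1) ∈ Finset.HasAntidiagonal.antidiagonal (a + 1) :=
    Finset.HasAntidiagonal.mem_antidiagonal.2 rfl
  simpa using Finset.single_le_sum
    (f := fun ij : ℕ × ℕ => (a + 1).choose ij.1 * (b + 1).choose ij.2) (fun _ _ => Nat.zero_le _) h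

theorem sum_inv_choose_le (n : ℕ) :
    ∑ i ∈ Finset.range n, ((n + 1).choose (i + 1) : ℝ)⁻¹ ≤ 2 * harmonic n / (n + 1) := by
  have hterm (i : ℕ) (hi : i ∈ Finset.range n) : ((n + 1).choose (i + 1) : ℝ)⁻¹ ≤
      (((i : ℝ) + 1)⁻¹ + (((n - 1 - i : ℕ) : ℝ) + 1)⁻¹) / (n + 1) := by
    obtain ⟨b, rfl⟩ := Nat.exists_eq_add_of_lt (Finset.mem_range.1 hi)
    have h : ((i : ℝ) + 1) * (b + 1) ≤ ((i + b + 1 + 1).choose (i + 1) : ℝ) := by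
      exact_mod_cast add_one_mul_add_one_le_choose i b
    calc _ ≤ (((i : ℝ) + 1) * (b + 1))⁻¹ := by gcongr
      _ = _ := by
        rw [show i + b + 1 - 1 - i = b by omega]
        push_cast
        field_simp
        ring
  calc _ ≤ _ := Finset.sum_le_sum hterm
    _ = _ := by
      rw [← Finset.sum_div, Finset.sum_add_distrib,
        Finset.sum_range_reflect (fun i : ℕ => ((i : ℝ) + 1)⁻¹), ← two_mul, harmonic]
      push_cast
      rfl

theorem uniformProb_exists_powersetCard_smul_eq_le [Finite α] [DecidableEq α] (d : ℕ) :
    uniformProb {p : Perm α × Perm α | ∃ s : Set.powersetCard α d, p.1 • s = s ∧ p.2 • s = s} ≤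
      ((Nat.card α).choose d : ℝ)⁻¹ := by
  have := Set.powersetCard.isPretransitive (α := α) (n := d)
  exact (uniformProb_exists_common_fixedPoint_le (Perm α) (Set.powersetCard α d)).trans_eq
    (by rw [Set.powersetCard.card])

theorem uniformProb_exists_uniformPartitions_smul_eq_le [Finite α] {d : ℕ} (hd : d < Nat.card α) :
    uniformProb {p : Perm α × Perm α |
        ∃ c : uniformPartitions α (d + 1), p.1 • c = c ∧ p.2 • c = c} ≤
      ((Nat.card α - 1).choose d : ℝ)⁻¹ := by
  cases isEmpty_or_nonempty (uniformPartitions α (d + 1)) with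
  | inl _ => simp [uniformProb]
  | inr _ =>
    have := uniformPartitions.isPretransitive (α := α) d.succ_pos
    have : Nonempty α := (Nat.card_pos_iff.1 (Nat.zero_lt_of_lt hd)).1
    refine (uniformProb_exists_common_fixedPoint_le _ _).trans ?_
    have : 0 < (Nat.card α - 1).choose d := Nat.choose_pos (Nat.le_sub_one_of_lt hd)
    gcongr
    exact uniformPartitions.choose_le_card

theorem uniformProb_not_isPreprimitive_closure_le_sum [Finite α] {n : ℕ}
    (hn : Nat.card α = n + 2) :
    uniformProb {p : Perm α × Perm α | ¬ IsPreprimitive (Subgroup.closure {p.1, p.2}) α} ≤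
      ∑ i ∈ Finset.range (n + 1), ((n + 2).choose (i + 1) : ℝ)⁻¹ +
        ∑ i ∈ Finset.range n, ((n + 1).choose (i + 1) : ℝ)⁻¹ := by
  classical
  let U (i : ℕ) : Set (Perm α × Perm α) :=
    {p | ∃ s : Set.powersetCard α (i + 1), p.1 • s = s ∧ p.2 • s = s}
  let V (i : ℕ) : Set (Perm α × Perm α) :=
    {p | ∃ c : uniformPartitions α (i + 1 + 1), p.1 • c = c ∧ p.2 • c = c}
  have hsub : {p : Perm α × Perm α | ¬ IsPreprimitive (Subgroup.closure {p.1, p.2}) α} ⊆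
      (⋃ i ∈ Finset.range (n + 1), U i) ∪ ⋃ i ∈ Finset.range n, V i := by
    intro p hp
    have h₁ : p.1 ∈ Subgroup.closure {p.1, p.2} := Subgroup.subset_closure (by simp)
    have h₂ : p.2 ∈ Subgroup.closure {p.1, p.2} := Subgroup.subset_closure (by simp)
    simp only [Set.mem_union, Set.mem_iUnion, Finset.mem_range]
    by_cases ht : IsPretransitive (Subgroup.closure {p.1, p.2}) α
    · obtain ⟨d, hd, hdn, c, hc⟩ := exists_uniformPartitions_smul_eq_of_not_isPreprimitive hp
      obtain ⟨i, rfl⟩ := Nat.exists_eq_add_of_le' hd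
      exact Or.inr ⟨i, by omega, c, hc _ h₁, hc _ h₂⟩
    · obtain ⟨d, hd, hdn, s, hs⟩ := exists_powersetCard_smul_eq_of_not_isPretransitive ht
      obtain ⟨i, rfl⟩ := Nat.exists_eq_add_of_le' hd
      exact Or.inl ⟨i, by omega, s, hs _ h₁, hs _ h₂⟩
  calc _ ≤ ∑ i ∈ Finset.range (n + 1), uniformProb (U i) +
          ∑ i ∈ Finset.range n, uniformProb (V i) :=
        (uniformProb_mono hsub).trans ((uniformProb_union_le _ _).trans
          (add_le_add (uniformProb_biUnion_le _ _) (uniformProb_biUnion_le _ _)))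
    _ ≤ ∑ i ∈ Finset.range (n + 1), ((n + 2).choose (i + 1) : ℝ)⁻¹ +
          ∑ i ∈ Finset.range n, ((n + 1).choose (i + 1) : ℝ)⁻¹ := by
        refine add_le_add (Finset.sum_le_sum fun i _ => ?_) (Finset.sum_le_sum fun i hi => ?_)
        · exact hn ▸ uniformProb_exists_powersetCard_smul_eq_le (α := α) (i + 1)
        · have := uniformProb_exists_uniformPartitions_smul_eq_le (α := α) (d := i + 1)
            (by have := Finset.mem_range.1 hi; omega)
          rwa [hn] at this

theorem uniformProb_not_isPreprimitive_closure_le [Finite α] [Nontrivial α] :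
    uniformProb {p : Perm α × Perm α | ¬ IsPreprimitive (Subgroup.closure {p.1, p.2}) α} ≤
      6 * (harmonic (Nat.card α) / Nat.card α) := by
  obtain ⟨n, hn⟩ : ∃ n, Nat.card α = n + 2 :=
    Nat.exists_eq_add_of_le' (Finite.one_lt_card (α := α))
  have h₀ : (0 : ℝ) ≤ harmonic (n + 2) := by exact_mod_cast (harmonic_pos (by omega)).le
  have h₁ : (harmonic (n + 1) : ℝ) ≤ harmonic (n + 2) := by
    exact_mod_cast monotone_harmonic (by omega)
  have h₂ : (harmonic n : ℝ) ≤ harmonic (n + 2) := by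
    exact_mod_cast monotone_harmonic (by omega)
  calc uniformProb {p : Perm α × Perm α | ¬ IsPreprimitive (Subgroup.closure {p.1, p.2}) α}
      ≤ 2 * harmonic (n + 1) / ((n + 1 : ℕ) + 1) + 2 * harmonic n / (n + 1) :=
        (uniformProb_not_isPreprimitive_closure_le_sum hn).trans
          (add_le_add (sum_inv_choose_le (n + 1)) (sum_inv_choose_le n))
    _ ≤ 2 * (harmonic (n + 2) : ℝ) / ((n + 1 : ℕ) + 1) +
          2 * (harmonic (n + 2) : ℝ) / ((n + 2) / 2) := by
        gcongr
        linarith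
    _ = 6 * (harmonic (Nat.card α) / Nat.card α) := by
        rw [hn]
        push_cast
        field_simp
        ring

end Primitivity

section PrimeReciprocals

theorem log_le_prod_primesBelow (N : ℕ) :
    Real.log N ≤ ∏ p ∈ N.primesBelow, (1 - (p : ℝ)⁻¹)⁻¹ := by
  let f : ℕ →* ℝ :=
    { toFun := fun n => (n : ℝ)⁻¹
      map_one' := by simp
      map_mul' := fun a b => by rw [Nat.cast_mul, mul_inv] }
  have hf {p : ℕ} (hp : p.Prime) : ‖f p‖ < 1 := by
    change ‖(p : ℝ)⁻¹‖ < 1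
    rw [norm_inv, Real.norm_natCast]
    exact inv_lt_one_of_one_lt₀ (by exact_mod_cast hp.one_lt)
  have hsum := (EulerProduct.summable_and_hasSum_smoothNumbers_prod_primesBelow_geometric hf N).2
  have hmem (n : Finset.Ico 1 N) : n.1 ∈ N.smoothNumbers :=
    Nat.mem_smoothNumbers_of_lt (Finset.mem_Ico.1 n.2).1 (Finset.mem_Ico.1 n.2).2
  let e : Finset.Ico 1 N ↪ N.smoothNumbers :=
    ⟨fun n => ⟨n, hmem n⟩, fun a b h => Subtype.ext (Subtype.mk.inj h)⟩
  calc Real.log N ≤ ∑ n ∈ Finset.Ico 1 N, (n : ℝ)⁻¹ := by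
        cases N with
        | zero => simp
        | succ n =>
          have h := log_add_one_le_harmonic n
          rw [harmonic_eq_sum_Icc, ← Finset.Ico_add_one_right_eq_Icc] at h
          push_cast at h ⊢
          exact h
    _ = ∑ n ∈ Finset.univ.map e, f n := by
        rw [Finset.sum_map, ← Finset.sum_coe_sort]
        rfl
    _ ≤ ∏ p ∈ N.primesBelow, (1 - f p)⁻¹ :=
        sum_le_hasSum _ (fun n _ => inv_nonneg.2 n.1.cast_nonneg) hsum

theorem one_le_inv_one_sub_inv {p : ℕ} (hp : p.Prime) : (1 : ℝ) ≤ (1 - (p : ℝ)⁻¹)⁻¹ :=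
  (one_le_inv₀ (sub_pos.2 (inv_lt_one_of_one_lt₀ (by exact_mod_cast hp.one_lt)))).2
    (sub_le_self 1 (by positivity))

theorem inv_one_sub_inv_le_exp {p : ℕ} (hp : p.Prime) :
    (1 - (p : ℝ)⁻¹)⁻¹ ≤ Real.exp (2 * (p : ℝ)⁻¹) := by
  have h2 : (2 : ℝ) ≤ p := by exact_mod_cast hp.two_le
  have h : (p : ℝ)⁻¹ ≤ 2⁻¹ := by gcongr
  have h0 : (0 : ℝ) ≤ (p : ℝ)⁻¹ := by positivity
  refine le_trans ?_ (Real.add_one_le_exp _)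
  rw [inv_le_iff_one_le_mul₀ (by linarith)]
  nlinarith

theorem prod_primesBelow_le_sqrt {m : ℕ} (hm : 1 ≤ m) :
    ∏ p ∈ (2 * m + 2).primesBelow, (1 - (p : ℝ)⁻¹)⁻¹ ≤ 2 * √(2 * m + 1) := by
  induction m, hm using Nat.le_induction with
  | base =>
    have h4 : Nat.primesBelow 4 = {2, 3} := by decide
    have h3 : (3 / 2 : ℝ) ≤ √3 := Real.le_sqrt_of_sq_le (by norm_num)
    norm_num [h4]
    linarith
  | succ m hm ih =>
    have heven : ¬ (2 * m + 2).Prime := by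
      rw [← mul_add_one]
      exact Nat.not_prime_mul (by norm_num) (by omega)
    have hfac : (1 - ((2 * m + 2 + 1 : ℕ) : ℝ)⁻¹)⁻¹ * √(2 * m + 1) ≤ √(2 * m + 3) := by
      apply Real.le_sqrt_of_sq_le
      rw [mul_pow, Real.sq_sqrt (by positivity)]
      have : (1 - ((2 * m + 2 + 1 : ℕ) : ℝ)⁻¹)⁻¹ = (2 * m + 3) / (2 * m + 2) := by
        push_cast
        field_simp
        ring
      rw [this, div_pow, div_mul_eq_mul_div, div_le_iff₀ (by positivity)]
      nlinarith
    have hle : (2 * (m + 1 : ℕ) + 1 : ℝ) = 2 * m + 3 := by push_cast; ring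
    rw [show 2 * (m + 1) + 2 = 2 * m + 2 + 1 + 1 by ring, Nat.primesBelow_succ, hle]
    split_ifs with hp
    · rw [Finset.prod_insert (Nat.notMem_primesBelow _), Nat.primesBelow_succ, if_neg heven]
      have := zero_le_one.trans (one_le_inv_one_sub_inv hp)
      calc _ ≤ (1 - ((2 * m + 2 + 1 : ℕ) : ℝ)⁻¹)⁻¹ * (2 * √(2 * m + 1)) := by gcongr
        _ = 2 * ((1 - ((2 * m + 2 + 1 : ℕ) : ℝ)⁻¹)⁻¹ * √(2 * m + 1)) := by ring
        _ ≤ _ := by gcongr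
    · rw [Nat.primesBelow_succ, if_neg heven]
      refine ih.trans ?_
      gcongr
      norm_num

theorem log_log_div_le_sum_inv_prime {m N : ℕ} (hm : 1 ≤ m) (hN : 2 ≤ N) :
    Real.log (Real.log N / (2 * √(2 * m + 1))) ≤
      2 * ∑ p ∈ Finset.Ioo (2 * m + 1) N with p.Prime, (p : ℝ)⁻¹ := by
  set P := (Finset.Ioo (2 * m + 1) N).filter Nat.Prime
  have hP {p : ℕ} (hp : p ∈ P) : p.Prime := (Finset.mem_filter.1 hp).2
  have hsub : N.primesBelow ⊆ (2 * m + 2).primesBelow ∪ P := by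
    intro p hp
    obtain ⟨hpN, hp⟩ := Nat.mem_primesBelow.1 hp
    simp only [P, Finset.mem_union, Nat.mem_primesBelow, Finset.mem_filter, Finset.mem_Ioo, hp,
      and_true, hpN]
    omega
  have hdisj : Disjoint (2 * m + 2).primesBelow P := by
    refine Finset.disjoint_left.2 fun p hp hpP => ?_
    have := Nat.lt_of_mem_primesBelow hp
    have := (Finset.mem_Ioo.1 (Finset.mem_filter.1 hpP).1).1
    omega
  have hone {p : ℕ} (hp : p ∈ (2 * m + 2).primesBelow ∪ P) : (1 : ℝ) ≤ (1 - (p : ℝ)⁻¹)⁻¹ :=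
    one_le_inv_one_sub_inv ((Finset.mem_union.1 hp).elim Nat.prime_of_mem_primesBelow hP)
  have hnonneg : ∀ p ∈ P, (0 : ℝ) ≤ (1 - (p : ℝ)⁻¹)⁻¹ := fun p hp =>
    zero_le_one.trans (one_le_inv_one_sub_inv (hP hp))
  have hlogN : 0 < Real.log N := Real.log_pos (by exact_mod_cast hN)
  rw [Real.log_le_iff_le_exp (by positivity), div_le_iff₀' (by positivity)]
  calc Real.log N ≤ ∏ p ∈ N.primesBelow, (1 - (p : ℝ)⁻¹)⁻¹ := log_le_prod_primesBelow N
    _ ≤ ∏ p ∈ (2 * m + 2).primesBelow ∪ P, (1 - (p : ℝ)⁻¹)⁻¹ :=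
        Finset.prod_le_prod_of_subset_of_one_le hsub
          (fun p hp => zero_le_one.trans (hone (hsub hp))) (fun p hp _ => hone hp)
    _ = (∏ p ∈ (2 * m + 2).primesBelow, (1 - (p : ℝ)⁻¹)⁻¹) * ∏ p ∈ P, (1 - (p : ℝ)⁻¹)⁻¹ :=
        Finset.prod_union hdisj
    _ ≤ 2 * √(2 * m + 1) * ∏ p ∈ P, Real.exp (2 * (p : ℝ)⁻¹) := by
        gcongr with p hp
        · exact Finset.prod_nonneg hnonneg
        · exact prod_primesBelow_le_sqrt hm
        · exact hnonneg
        · exact inv_one_sub_inv_le_exp (hP hp)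
    _ = 2 * √(2 * m + 1) * Real.exp (2 * ∑ p ∈ P, (p : ℝ)⁻¹) := by
        rw [Finset.mul_sum, Real.exp_sum]

end PrimeReciprocals

section PrimeWindow

open Filter Topology

/-- The primes between roughly `2 (log k) ^ (3 / 2)` and `k / 2`. The exponent is chosen strictly
between `1` and `2`: as `k → ∞`, the sum of `1 / p` over this window tends to infinity while
`log k` times the sum of `1 / p ^ 2` tends to zero. -/
noncomputable def primeWindow (k : ℕ) : Finset ℕ :=
  {p ∈ Finset.Ioo (2 * ⌊Real.log k ^ (3 / 2 : ℝ)⌋₊ + 1) (k / 2 + 1) | p.Prime}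

theorem prime_and_two_mul_le_of_mem_primeWindow {k p : ℕ} (hp : p ∈ primeWindow k) :
    p.Prime ∧ 2 * p ≤ k := by
  obtain ⟨hmem, hprime⟩ := Finset.mem_filter.1 hp
  have := (Finset.mem_Ioo.1 hmem).2
  exact ⟨hprime, by omega⟩

theorem half_log_le_log_half_add_one {k : ℕ} (hk : 0 < k) :
    Real.log k / 2 ≤ Real.log (k / 2 + 1 : ℕ) := by
  rw [← Real.log_sqrt k.cast_nonneg]
  refine Real.log_le_log (by positivity) (Real.sqrt_le_iff.2 ⟨by positivity, ?_⟩)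
  have h : (k : ℝ) + 1 ≤ 2 * (k / 2 + 1 : ℕ) := by exact_mod_cast (by omega)
  nlinarith [sq_nonneg ((k : ℝ) - 1)]

theorem log_rpow_le_two_mul_sum_inv_primeWindow {k : ℕ} (hk : 1 ≤ Real.log k) :
    Real.log (Real.log k ^ (1 / 4 : ℝ) / 8) ≤ 2 * ∑ p ∈ primeWindow k, (p : ℝ)⁻¹ := by
  set L := Real.log k
  set m := ⌊L ^ (3 / 2 : ℝ)⌋₊
  have hk1 : 1 < (k : ℝ) := by
    by_contra! h
    linarith [Real.log_nonpos k.cast_nonneg h]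
  have hk1 : 1 < k := by exact_mod_cast hk1
  have hpow : 1 ≤ L ^ (3 / 2 : ℝ) := Real.one_le_rpow hk (by norm_num)
  have hm : (m : ℝ) ≤ L ^ (3 / 2 : ℝ) := Nat.floor_le (by positivity)
  have hsqrt : √(2 * m + 1) ≤ 2 * L ^ (3 / 4 : ℝ) := by
    refine Real.sqrt_le_iff.2 ⟨by positivity, ?_⟩
    rw [mul_pow, ← Real.rpow_mul_natCast (by positivity)]
    norm_num
    linarith
  have hratio : L ^ (1 / 4 : ℝ) / 8 ≤ Real.log (k / 2 + 1 : ℕ) / (2 * √(2 * m + 1)) := by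
    rw [le_div_iff₀ (by positivity)]
    calc L ^ (1 / 4 : ℝ) / 8 * (2 * √(2 * m + 1))
        ≤ L ^ (1 / 4 : ℝ) / 8 * (2 * (2 * L ^ (3 / 4 : ℝ))) := by gcongr
      _ = L ^ (1 / 4 : ℝ) * L ^ (3 / 4 : ℝ) / 2 := by ring
      _ = L / 2 := by rw [← Real.rpow_add (by positivity)]; norm_num
      _ ≤ Real.log (k / 2 + 1 : ℕ) := half_log_le_log_half_add_one (by omega)
  exact (Real.log_le_log (by positivity) hratio).trans
    (log_log_div_le_sum_inv_prime ((Nat.one_le_floor_iff _).2 hpow) (by omega))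

theorem tendsto_log_natCast_atTop : Tendsto (fun k : ℕ => Real.log k) atTop atTop :=
  Real.tendsto_log_atTop.comp tendsto_natCast_atTop_atTop

theorem tendsto_sum_inv_primeWindow :
    Tendsto (fun k => ∑ p ∈ primeWindow k, (p : ℝ)⁻¹) atTop atTop := by
  have hrpow : Tendsto (fun k : ℕ => Real.log k ^ (1 / 4 : ℝ) / 8) atTop atTop :=
    ((tendsto_rpow_atTop (by norm_num)).comp tendsto_log_natCast_atTop).atTop_div_const
      (by norm_num)
  refine tendsto_atTop_mono' _ ?_
    ((Real.tendsto_log_atTop.comp hrpow).atTop_div_const (r := 2) (by norm_num))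
  filter_upwards [tendsto_log_natCast_atTop.eventually_ge_atTop 1] with k hk
  exact (div_le_iff₀' (by norm_num)).2 (log_rpow_le_two_mul_sum_inv_primeWindow hk)

theorem sum_inv_sq_primeWindow_le {k : ℕ} (hk : 0 < Real.log k) :
    ∑ p ∈ primeWindow k, ((p : ℝ) ^ 2)⁻¹ ≤ (Real.log k ^ (3 / 2 : ℝ))⁻¹ := by
  set m := ⌊Real.log k ^ (3 / 2 : ℝ)⌋₊
  calc ∑ p ∈ primeWindow k, ((p : ℝ) ^ 2)⁻¹
      ≤ ∑ p ∈ Finset.Ioo (2 * m + 1) (k / 2 + 1), ((p : ℝ) ^ 2)⁻¹ :=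
        Finset.sum_le_sum_of_subset_of_nonneg (Finset.filter_subset _ _)
          fun _ _ _ => by positivity
    _ ≤ 2 / ((2 * m + 1 : ℕ) + 1) := sum_Ioo_inv_sq_le _ _
    _ = (m + 1 : ℝ)⁻¹ := by push_cast; field_simp; ring
    _ ≤ (Real.log k ^ (3 / 2 : ℝ))⁻¹ := by
        gcongr
        exact (Nat.lt_floor_add_one _).le

theorem tendsto_harmonic_mul_sum_inv_sq_primeWindow :
    Tendsto (fun k => harmonic k * ∑ p ∈ primeWindow k, ((p : ℝ) ^ 2)⁻¹) atTop (𝓝 0) := by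
  have hlim : Tendsto (fun k : ℕ => 2 * Real.log k ^ (-(1 / 2) : ℝ)) atTop (𝓝 0) := by
    simpa using ((tendsto_rpow_neg_atTop (by norm_num : (0 : ℝ) < 1 / 2)).comp
      tendsto_log_natCast_atTop).const_mul 2
  refine squeeze_zero' (.of_forall fun k => ?_) ?_ hlim
  · have : (0 : ℝ) ≤ harmonic k := by exact_mod_cast monotone_harmonic k.zero_le
    positivity
  · filter_upwards [tendsto_log_natCast_atTop.eventually_ge_atTop 1] with k hk
    have hpos : 0 < Real.log k := by linarith
    calc _ ≤ (1 + Real.log k) * (Real.log k ^ (3 / 2 : ℝ))⁻¹ := by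
          gcongr
          · exact harmonic_le_one_add_log k
          · exact sum_inv_sq_primeWindow_le hpos
      _ ≤ 2 * Real.log k * (Real.log k ^ (3 / 2 : ℝ))⁻¹ := by gcongr; linarith
      _ = 2 * Real.log k ^ (-(1 / 2) : ℝ) := by
          rw [mul_assoc, ← Real.rpow_neg hpos.le, ← Real.rpow_one_add' hpos.le (by norm_num)]
          norm_num

theorem tendsto_harmonic_div_natCast :
    Tendsto (fun k : ℕ => (harmonic k / k : ℝ)) atTop (𝓝 0) := by
  refine (tendsto_one_div_add_atTop_nhds_zero_nat (𝕜 := ℝ)).cesaro.congr fun k => ?_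
  simp only [harmonic, one_div]
  push_cast
  exact (div_eq_inv_mul _ _).symm

end PrimeWindow

section Probability

open Equiv Equiv.Perm Filter Topology

variable {α : Type*} [Fintype α] [DecidableEq α] [Nontrivial α]

theorem uniformProb_alternatingGroup :
    uniformProb (alternatingGroup α : Set (Perm α)) = 1 / 2 := by
  have h : (2 * Nat.card (alternatingGroup α) : ℝ) = Nat.card (Perm α) := by
    exact_mod_cast two_mul_nat_card_alternatingGroup
  have hpos : (0 : ℝ) < Nat.card (Perm α) := Nat.cast_pos.2 Nat.card_pos
  rw [uniformProb, ← Nat.card_coe_set_eq, div_eq_div_iff hpos.ne' two_ne_zero, one_mul, ← h]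
  exact mul_comm _ _

theorem uniformProb_alternatingGroup_prod :
    uniformProb ((alternatingGroup α : Set (Perm α)) ×ˢ (alternatingGroup α : Set (Perm α))) =
      1 / 4 := by
  rw [uniformProb_prod, uniformProb_alternatingGroup]
  norm_num

/-- The pairs of permutations that circularly generate the square of the alternating group. -/
def circGenPairs (k : ℕ) : Set (Perm (Fin k) × Perm (Fin k)) :=
  {p | circGenPair p.1 p.2 = (alternatingGroup (Fin k)).prod (alternatingGroup (Fin k))}

theorem circGenPairs_subset (k : ℕ) :
    circGenPairs k ⊆ (alternatingGroup (Fin k) : Set (Perm (Fin k))) ×ˢ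
      (alternatingGroup (Fin k) : Set (Perm (Fin k))) := by
  rintro ⟨σ, τ⟩ h
  have hmem : (σ, τ) ∈ circGenPair σ τ := Subgroup.subset_closure (.inl rfl)
  exact Subgroup.mem_prod.1 (h ▸ hmem)

theorem uniformProb_circGenPairs_le {k : ℕ} (hk : 2 ≤ k) :
    uniformProb (circGenPairs k) ≤ 1 / 4 :=
  have : Nontrivial (Fin k) := Fin.nontrivial_iff_two_le.2 hk
  (uniformProb_mono (circGenPairs_subset k)).trans_eq uniformProb_alternatingGroup_prod

theorem alternatingGroup_prod_subset_circGenPairs_union {k : ℕ} (hk : 5 ≤ k) {P : Finset ℕ}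
    (hP : ∀ p ∈ P, p.Prime ∧ 2 * p ≤ k) :
    (alternatingGroup (Fin k) : Set (Perm (Fin k))) ×ˢ
        (alternatingGroup (Fin k) : Set (Perm (Fin k))) ⊆
      circGenPairs k ∪ ({p | ¬ MulAction.IsPreprimitive (Subgroup.closure {p.1, p.2}) (Fin k)} ∪
        ({σ | ∀ p ∈ P, p ∉ σ.cycleType} ×ˢ Set.univ ∪
          {p | ∃ d ∈ P, d ∈ p.1.cycleType ∧
            ((∃ l ∈ p.1.cycleType.erase d, d ∣ l) ∨ ∃ l ∈ p.2.cycleType, d ∣ l)})) := by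
  rintro ⟨σ, τ⟩ ⟨hσ, hτ⟩
  by_contra! hbad
  simp only [Set.mem_union, Set.mem_prod, Set.mem_ofPred_eq, Set.mem_univ, and_true, not_or,
    not_not] at hbad
  obtain ⟨hgood, hprim, hlen, hdvd⟩ := hbad
  push Not at hlen hdvd
  obtain ⟨p, hp, hpσ⟩ := hlen
  obtain ⟨hσ', hτ'⟩ := hdvd p hp hpσ
  exact hgood (circGenPair_eq_alternatingGroup_prod hk hσ hτ hprim (hP p hp).1 (hP p hp).2
    hpσ hσ' hτ')

theorem le_uniformProb_circGenPairs {k : ℕ} (hk : 5 ≤ k) {P : Finset ℕ} (hne : P.Nonempty)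
    (hP : ∀ p ∈ P, p.Prime ∧ 2 * p ≤ k) :
    1 / 4 - (6 * (harmonic k / k) + ((∑ p ∈ P, (p : ℝ)⁻¹)⁻¹ +
      2 * (harmonic k * ∑ p ∈ P, ((p : ℝ) ^ 2)⁻¹))) ≤ uniformProb (circGenPairs k) := by
  have : Nontrivial (Fin k) := Fin.nontrivial_iff_two_le.2 (by omega)
  have hbounds : ∀ p ∈ P, 2 ≤ p ∧ p ≤ Fintype.card (Fin k) := fun p hp =>
    ⟨(hP p hp).1.two_le, by rw [Fintype.card_fin]; linarith [(hP p hp).2]⟩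
  have hprim := uniformProb_not_isPreprimitive_closure_le (α := Fin k)
  have hlen := uniformProb_forall_notMem_cycleType_le hne hbounds
  have hdvd := uniformProb_exists_mem_cycleType_and_dvd_le hbounds
  rw [Nat.card_fin] at hprim
  rw [Fintype.card_fin, mul_assoc] at hdvd
  rw [sub_le_iff_le_add, ← uniformProb_alternatingGroup_prod (α := Fin k)]
  calc _ ≤ _ := uniformProb_mono (alternatingGroup_prod_subset_circGenPairs_union hk hP)
    _ ≤ _ := (uniformProb_union_le _ _).trans (add_le_add_right ((uniformProb_union_le _ _).trans
      (add_le_add_right (uniformProb_union_le _ _) _)) _)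
    _ ≤ _ := by
      rw [uniformProb_prod, uniformProb_univ, mul_one]
      gcongr

theorem tendsto_uniformProb_circGenPairs :
    Tendsto (fun k => uniformProb (circGenPairs k)) atTop (𝓝 (1 / 4)) := by
  have herror := (tendsto_harmonic_div_natCast.const_mul 6).add
    (tendsto_sum_inv_primeWindow.inv_tendsto_atTop.add
      (tendsto_harmonic_mul_sum_inv_sq_primeWindow.const_mul 2))
  have hlower := (tendsto_const_nhds (x := (1 / 4 : ℝ))).sub herror
  rw [mul_zero, mul_zero, add_zero, add_zero, sub_zero] at hlower
  refine tendsto_of_tendsto_of_tendsto_of_le_of_le' hlower tendsto_const_nhds ?_ ?_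
  · filter_upwards [eventually_ge_atTop 5, tendsto_sum_inv_primeWindow.eventually_gt_atTop 0]
      with k hk hpos
    exact le_uniformProb_circGenPairs hk (Finset.nonempty_of_sum_ne_zero hpos.ne')
      fun _ => prime_and_two_mul_le_of_mem_primeWindow
  · filter_upwards [eventually_ge_atTop 2] with k hk
    exact uniformProb_circGenPairs_le hk

end Probability

/-- The group circularly generated by a pair of uniformly random permutations of `k`
points equals `A_k × A_k` with probability tending to `1/4`. -/
theorem circGenPair_alternating_probability :
    Filter.Tendsto
      (fun k : ℕ =>
        (Nat.card {p : Equiv.Perm (Fin k) × Equiv.Perm (Fin k) //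
            circGenPair p.1 p.2 =
              (alternatingGroup (Fin k)).prod (alternatingGroup (Fin k))} : ℝ) /
          (Nat.factorial k : ℝ) ^ 2)
      Filter.atTop (nhds (1 / 4)) := by
  refine tendsto_uniformProb_circGenPairs.congr fun k => ?_
  rw [uniformProb, ← Nat.card_coe_set_eq, Nat.card_prod, Nat.card_perm, Nat.card_fin,
    Nat.cast_mul, ← sq]
  rfl
end

section
/- Let k ≥ 7 and let σ₀, σ₁, σ₂ ∈ Equiv.Perm (Fin k) be permutations that do not all have the same order (i.e. ¬(orderOf σ₀ = orderOf σ₁ ∧ orderOf σ₁ = orderOf σ₂)) and such that Subgroup.closure {σ₀, σ₁, σ₂} = ⊤ or Subgroup.closure {σ₀, σ₁, σ₂} = alternatingGroup (Fin k). Then there exists a prime p and a p-cycle π ∈ Equiv.Perm (Fin k) such that (1, 1, π) belongs to the group circularly generated by the triple (σ₀, σ₁, σ₂), i.e. the subgroup of Equiv.Perm (Fin k) × Equiv.Perm (Fin k) × Equiv.Perm (Fin k) generated by (σ₀, σ₁, σ₂), (σ₁, σ₂, σ₀) and (σ₂, σ₀, σ₁). -/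
/-!
Let `H` be the group circularly generated by the triple. A power of one generator makes its first
coordinate trivial, and since the orders differ, some such power is not the identity; rotating it,
`H` contains elements `(1, *, z)` and `(*, 1, z')` with `z, z' ≠ 1`. The third coordinates of all
elements of `H` of either shape form a nontrivial subgroup normalized by the alternating group `A`,
hence containing `A`, since `A` is simple with trivial centralizer. The commutator of an element
`(1, *, u)` with an element `(*, 1, v)` is `(1, 1, [u, v])`, and `A` is perfect, so `(1, 1, π) ∈ H`
for every `π ∈ A`.
-/

open Subgroup

section NormalSimpleSubgroup

variable {G P : Type*} [Group G] [Group P] {A : Subgroup G} [A.Normal] [IsSimpleGroup A]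

theorem le_of_le_normalizer_of_centralizer_eq_bot (hA : centralizer (A : Set G) = ⊥)
    {N : Subgroup G} (hN : N ≠ ⊥) (hAN : A ≤ normalizer (N : Set G)) : A ≤ N := by
  have hnormal : (N.subgroupOf A).Normal := normal_subgroupOf_of_le_normalizer hAN
  suffices N.subgroupOf A ≠ ⊥ from
    subgroupOf_eq_top.mp (hnormal.eq_bot_or_eq_top.resolve_left this)
  intro hbot
  -- `N` and `A` normalize each other, so they commute as soon as they intersect trivially.
  have hcommN : ⁅N, A⁆ ≤ N := le_normalizer_iff_commutator_le_left.mp hAN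
  have hcomm : ⁅N, A⁆ = ⊥ := le_bot_iff.mp <|
    (le_inf hcommN (commutator_le_right N A)).trans (subgroupOf_eq_bot.mp hbot).le_bot
  exact hN (by rwa [commutator_eq_bot_iff_le_centralizer, hA, le_bot_iff] at hcomm)

theorem le_commutator_self_of_centralizer_eq_bot (hA : centralizer (A : Set G) = ⊥) :
    A ≤ ⁅A, A⁆ := by
  refine le_of_le_normalizer_of_centralizer_eq_bot hA (fun hcomm => ?_) le_normalizer_of_normal
  rw [commutator_eq_bot_iff_le_centralizer, hA, le_bot_iff] at hcomm
  exact (nontrivial_iff_ne_bot A).mp inferInstance hcomm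

theorem le_map_inf_of_map_inf_ne_bot (hA : centralizer (A : Set G) = ⊥) {f : P →* G}
    {H : Subgroup P} (hAH : A ≤ H.map f) {K : Subgroup P} [K.Normal] (hK : (H ⊓ K).map f ≠ ⊥) :
    A ≤ (H ⊓ K).map f := by
  refine le_of_le_normalizer_of_centralizer_eq_bot hA hK (hAH.trans ?_)
  have hnorm : H ≤ normalizer ((H ⊓ K : Subgroup P) : Set P) :=
    (le_inf le_normalizer le_normalizer_of_normal).trans inf_normalizer_le_normalizer_inf
  exact (map_mono hnorm).trans (le_normalizer_map f)

theorem le_map_inf_inf_of_map_inf_ne_bot (hA : centralizer (A : Set G) = ⊥) {f : P →* G}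
    {H : Subgroup P} (hAH : A ≤ H.map f) {K L : Subgroup P} [K.Normal] [L.Normal]
    (hK : (H ⊓ K).map f ≠ ⊥) (hL : (H ⊓ L).map f ≠ ⊥) : A ≤ (H ⊓ (K ⊓ L)).map f :=
  calc
    A ≤ ⁅A, A⁆ := le_commutator_self_of_centralizer_eq_bot hA
    _ ≤ ⁅(H ⊓ K).map f, (H ⊓ L).map f⁆ :=
      commutator_mono (le_map_inf_of_map_inf_ne_bot hA hAH hK)
        (le_map_inf_of_map_inf_ne_bot hA hAH hL)
    _ = ⁅H ⊓ K, H ⊓ L⁆.map f := (map_commutator _ _ f).symm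
    _ ≤ (H ⊓ (K ⊓ L)).map f := map_mono <| le_inf
      ((commutator_mono inf_le_left inf_le_left).trans H.commutator_le_self)
      ((commutator_mono inf_le_right inf_le_right).trans (commutator_le_inf K L))

end NormalSimpleSubgroup

theorem orderOf_snd_dvd_orderOf_fst {G₁ G₂ : Type*} [Group G₁] [Group G₂]
    {H : Subgroup (G₁ × G₂)} (hH : ∀ y, (1, y) ∈ H → y = 1) {x : G₁} {y : G₂}
    (hxy : (x, y) ∈ H) : orderOf y ∣ orderOf x :=
  orderOf_dvd_of_pow_eq_one <| hH _ <| by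
    simpa only [Prod.pow_mk, pow_orderOf_eq_one] using H.pow_mem hxy (orderOf x)

section CircGenTriple

variable {G : Type*} [Group G] {a b c : G}

/-- The group circularly generated by the triple `(a, b, c)`: the subgroup of `G × G × G`
generated by its three rotations. -/
def circGenTriple (a b c : G) : Subgroup (G × G × G) :=
  closure {(a, b, c), (b, c, a), (c, a, b)}

theorem rotate_mem_circGenTriple {x y z : G} (h : (x, y, z) ∈ circGenTriple a b c) :
    (y, z, x) ∈ circGenTriple a b c := by
  let rotate : G × G × G →* G × G × G :=
    ((MonoidHom.fst G G).comp (MonoidHom.snd G (G × G))).prod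
      (((MonoidHom.snd G G).comp (MonoidHom.snd G (G × G))).prod (MonoidHom.fst G (G × G)))
  suffices circGenTriple a b c ≤ (circGenTriple a b c).comap rotate from this h
  refine (closure_le _).mpr ?_
  rintro _ (rfl | rfl | rfl) <;> exact subset_closure (by simp [rotate])

theorem map_thd_circGenTriple (a b c : G) :
    (circGenTriple a b c).map ((MonoidHom.snd G G).comp (MonoidHom.snd G (G × G))) =
      closure {a, b, c} := by
  rw [circGenTriple, MonoidHom.map_closure, Set.image_insert_eq, Set.image_pair]
  change closure {c, a, b} = closure {a, b, c}
  rw [Set.insert_comm c a, Set.pair_comm c b]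

theorem exists_one_mem_circGenTriple_ne_one
    (horder : ¬(orderOf a = orderOf b ∧ orderOf b = orderOf c)) :
    ∃ y z, (1, y, z) ∈ circGenTriple a b c ∧ (y, z) ≠ 1 := by
  by_contra! htriv
  have hdvd {x y z : G} (h : (x, y, z) ∈ circGenTriple a b c) :
      orderOf y ∣ orderOf x ∧ orderOf z ∣ orderOf x := by
    have hyz := orderOf_snd_dvd_orderOf_fst (fun w => htriv w.1 w.2) h
    exact ⟨orderOf_fst_dvd_orderOf.trans hyz, orderOf_snd_dvd_orderOf.trans hyz⟩
  have habc : (a, b, c) ∈ circGenTriple a b c := subset_closure (by simp)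
  have hbca := rotate_mem_circGenTriple habc
  have hcab := rotate_mem_circGenTriple hbca
  exact horder ⟨(hdvd hbca).2.antisymm (hdvd habc).1, (hdvd hcab).2.antisymm (hdvd hbca).1⟩

theorem exists_mem_circGenTriple_thd_ne_one
    (horder : ¬(orderOf a = orderOf b ∧ orderOf b = orderOf c)) :
    (∃ y z, (1, y, z) ∈ circGenTriple a b c ∧ z ≠ 1) ∧
      ∃ x z, (x, 1, z) ∈ circGenTriple a b c ∧ z ≠ 1 := by
  obtain ⟨y, z, h, hne⟩ := exists_one_mem_circGenTriple_ne_one horder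
  have h' := rotate_mem_circGenTriple (rotate_mem_circGenTriple h)
  by_cases hy : y = 1
  · subst hy
    have hz : z ≠ 1 := by rintro rfl; exact hne rfl
    exact ⟨⟨1, z, h, hz⟩, 1, z, h, hz⟩
  · refine ⟨?_, z, y, h', hy⟩
    by_cases hz : z = 1
    · subst hz
      exact ⟨1, y, h', hy⟩
    · exact ⟨y, z, h, hz⟩

theorem one_one_mem_circGenTriple {A : Subgroup G} [A.Normal] [IsSimpleGroup A]
    (hA : centralizer (A : Set G) = ⊥)
    (horder : ¬(orderOf a = orderOf b ∧ orderOf b = orderOf c))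
    (hgen : A ≤ closure {a, b, c}) {g : G} (hg : g ∈ A) : (1, 1, g) ∈ circGenTriple a b c := by
  obtain ⟨⟨y, z, hyz, hz⟩, x, w, hxw, hw⟩ := exists_mem_circGenTriple_thd_ne_one horder
  let fst : G × G × G →* G := MonoidHom.fst G (G × G)
  let snd : G × G × G →* G := (MonoidHom.fst G G).comp (MonoidHom.snd G (G × G))
  let thd : G × G × G →* G := (MonoidHom.snd G G).comp (MonoidHom.snd G (G × G))
  have hfst : (circGenTriple a b c ⊓ fst.ker).map thd ≠ ⊥ :=
    ne_bot_iff_exists_ne_one.mpr ⟨⟨z, (1, y, z), ⟨hyz, rfl⟩, rfl⟩,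
      fun h => hz (congrArg Subtype.val h)⟩
  have hsnd : (circGenTriple a b c ⊓ snd.ker).map thd ≠ ⊥ :=
    ne_bot_iff_exists_ne_one.mpr ⟨⟨w, (x, 1, w), ⟨hxw, rfl⟩, rfl⟩,
      fun h => hw (congrArg Subtype.val h)⟩
  have hAmap : A ≤ (circGenTriple a b c).map thd := hgen.trans (map_thd_circGenTriple a b c).ge
  obtain ⟨⟨_, _, _⟩, ⟨hmem, rfl, rfl⟩, rfl⟩ :=
    le_map_inf_inf_of_map_inf_ne_bot hA hAmap hfst hsnd hg
  exact hmem

end CircGenTriple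

theorem centralizer_alternatingGroup_eq_bot {α : Type*} [Fintype α] [DecidableEq α]
    (hα : 5 ≤ Nat.card α) : centralizer (alternatingGroup α : Set (Equiv.Perm α)) = ⊥ := by
  by_contra hne
  have hle : alternatingGroup α ≤ centralizer (alternatingGroup α : Set (Equiv.Perm α)) :=
    Equiv.Perm.alternatingGroup_le_of_normal hα ((nontrivial_iff_ne_bot _).mpr hne)
  have hcard : Nat.card α ≤ 3 :=
    alternatingGroup.isMulCommutative_iff_card_le_three.mp
      (le_centralizer_iff_isMulCommutative.mp hle)
  omega

theorem exists_cycle_mem_circGenTriple_general {α : Type*} [Fintype α] [DecidableEq α]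
    (hα : 5 ≤ Nat.card α) {σ₀ σ₁ σ₂ : Equiv.Perm α}
    (horder : ¬(orderOf σ₀ = orderOf σ₁ ∧ orderOf σ₁ = orderOf σ₂))
    (hgen : alternatingGroup α ≤ closure {σ₀, σ₁, σ₂}) :
    ∀ π ∈ alternatingGroup α, (1, 1, π) ∈ circGenTriple σ₀ σ₁ σ₂ := by
  have := alternatingGroup.isSimpleGroup hα
  exact fun π => one_one_mem_circGenTriple (centralizer_alternatingGroup_eq_bot hα) horder hgen

/-- If three permutations of `k ≥ 7` points do not all have the same order and
generate `S_k` or `A_k`, then the group circularly generated by the triple contains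
`(1, 1, π)` for some prime-length cycle `π`. -/
theorem exists_cycle_mem_circGenTriple {k : ℕ} (hk : 7 ≤ k)
    (σ₀ σ₁ σ₂ : Equiv.Perm (Fin k))
    (horder : ¬(orderOf σ₀ = orderOf σ₁ ∧ orderOf σ₁ = orderOf σ₂))
    (hgen : Subgroup.closure {σ₀, σ₁, σ₂} = ⊤ ∨
      Subgroup.closure {σ₀, σ₁, σ₂} = alternatingGroup (Fin k)) :
    ∃ (p : ℕ) (π : Equiv.Perm (Fin k)), p.Prime ∧ π.IsCycle ∧ π.support.card = p ∧
      (1, 1, π) ∈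
        Subgroup.closure {((σ₀, σ₁, σ₂) :
            Equiv.Perm (Fin k) × Equiv.Perm (Fin k) × Equiv.Perm (Fin k)),
          (σ₁, σ₂, σ₀), (σ₂, σ₀, σ₁)} := by
  have hcard : 5 ≤ Nat.card (Fin k) := by rw [Nat.card_fin]; omega
  have hle : alternatingGroup (Fin k) ≤ closure {σ₀, σ₁, σ₂} :=
    hgen.elim (fun h => h ▸ le_top) fun h => h.ge
  obtain ⟨π, -, hπ⟩ := Equiv.Perm.exists_mem_stabilizer_isThreeCycle (∅ : Set (Fin k)) hcard
  exact ⟨3, π, Nat.prime_three, hπ.isCycle, hπ.card_support,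
    exists_cycle_mem_circGenTriple_general hcard horder hle π hπ.mem_alternatingGroup⟩
end
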